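/- arXiv:1505.01794 — 2 statements merged into one kernel-verified Lean document; each statement's English description precedes it below -/
import Mathlib

section
/- There exists a constant C > 0 with the following property: for every strong solution u of the abstract damped wave equation with initial data u(0) = u₀ ∈ D(A), u'(0) = u₁ ∈ H, every solution v of the associated abstract heat equation with initial value v(0) = B^{1/2}u₀ + B^{-1/2}u₁, and every t > 1, one has ‖u(t) − B^{-1/2}v(t)‖ ≤ C·t⁻¹·(‖u₀‖ + (re⟪Au₀,u₀⟫)^{1/2} + ‖u₁‖). -/
/-- A strong solution of the abstract damped wave equation `u'' + Au + Bu' = 0` on `[0,∞)`. -/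
structure DampedWaveSolution
    {H : Type*} [NormedAddCommGroup H] [InnerProductSpace ℂ H] [CompleteSpace H]
    (A : H →ₗ.[ℂ] H) (B : H →L[ℂ] H) where
  u : ℝ → H
  du : ℝ → H
  ddu : ℝ → H
  Au : ℝ → H
  mem : ∀ t : ℝ, 0 ≤ t → u t ∈ A.domain
  hAu : ∀ (t : ℝ) (ht : 0 ≤ t), A ⟨u t, mem t ht⟩ = Au t
  hdu : ∀ t : ℝ, 0 ≤ t → HasDerivWithinAt u (du t) (Set.Ici 0) t
  hddu : ∀ t : ℝ, 0 ≤ t → HasDerivWithinAt du (ddu t) (Set.Ici 0) t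
  cont_ddu : ContinuousOn ddu (Set.Ici 0)
  cont_Au : ContinuousOn Au (Set.Ici 0)
  eqn : ∀ t : ℝ, 0 ≤ t → ddu t + Au t + B (du t) = 0

/-- A solution of the associated abstract heat equation
`v' + B^{-1/2} A B^{-1/2} v = 0` on `[0,∞)`, where `Binvh` stands for `B^{-1/2}`. -/
structure HeatSolution
    {H : Type*} [NormedAddCommGroup H] [InnerProductSpace ℂ H] [CompleteSpace H]
    (A : H →ₗ.[ℂ] H) (Binvh : H →L[ℂ] H) where
  v : ℝ → H
  dv : ℝ → H
  mem : ∀ t : ℝ, 0 ≤ t → Binvh (v t) ∈ A.domain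
  hdv : ∀ t : ℝ, 0 ≤ t → HasDerivWithinAt v (dv t) (Set.Ici 0) t
  cont_dv : ContinuousOn dv (Set.Ici 0)
  eqn : ∀ (t : ℝ) (ht : 0 ≤ t), dv t + Binvh (A ⟨Binvh (v t), mem t ht⟩) = 0

section Aux
open Set Filter Topology
open scoped RealInnerProductSpace

/-- A closed-graph style wave solution over a real Hilbert space. -/
structure IsW {H : Type*} [NormedAddCommGroup H] [InnerProductSpace ℝ H]
    (Γ : Submodule ℝ (H × H)) (B : H →L[ℝ] H) (u du ddu au : ℝ → H) : Prop where
  mem : ∀ t : ℝ, 0 ≤ t → (u t, au t) ∈ Γ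
  hu : ∀ t : ℝ, 0 ≤ t → HasDerivWithinAt u (du t) (Ici 0) t
  hdu : ∀ t : ℝ, 0 ≤ t → HasDerivWithinAt du (ddu t) (Ici 0) t
  cont : ContinuousOn au (Ici 0)
  eqn : ∀ t : ℝ, 0 ≤ t → ddu t = - au t - B (du t)

/-- Standing hypotheses. -/
structure WaveHyp {H : Type*} [NormedAddCommGroup H] [InnerProductSpace ℝ H]
    (Γ : Submodule ℝ (H × H)) (B : H →L[ℝ] H) (c b : ℝ) : Prop where
  sym : ∀ p ∈ Γ, ∀ q ∈ Γ, ⟪p.2, q.1⟫ = ⟪p.1, q.2⟫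
  max : ∀ x y : H, (∀ p ∈ Γ, ⟪p.2, x⟫ = ⟪p.1, y⟫) → (x, y) ∈ Γ
  pos : ∀ p ∈ Γ, 0 ≤ ⟪p.2, p.1⟫
  Bsym : ∀ x y : H, ⟪B x, y⟫ = ⟪x, B y⟫
  hc : 0 < c
  hb : 0 ≤ b
  lb : ∀ x : H, c * ‖x‖ ^ 2 ≤ ⟪B x, x⟫
  ub : ∀ x : H, ‖B x‖ ≤ b * ‖x‖

variable {H : Type*} [NormedAddCommGroup H] [InnerProductSpace ℝ H]
  {Γ : Submodule ℝ (H × H)} {B : H →L[ℝ] H} {c b : ℝ}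

theorem aux_mono {f f' : ℝ → ℝ} {T : ℝ} (hT : 0 ≤ T)
    (h : ∀ t ∈ Icc 0 T, HasDerivWithinAt f (f' t) (Ici 0) t)
    (hn : ∀ t ∈ Icc 0 T, f' t ≤ 0) : f T ≤ f 0 := by
  have := image_le_of_deriv_right_le_deriv_boundary (f := f) (f' := f') (a := 0) (b := T)
    (B := fun _ => f 0) (B' := fun _ => 0)
    (fun t ht => ((h t ht).continuousWithinAt).mono (fun x hx => hx.1))
    (fun t ht => (h t ⟨ht.1, ht.2.le⟩).mono (fun x hx => ht.1.trans hx)) le_rfl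
    continuousOn_const (fun t _ => (hasDerivWithinAt_const _ _ _))
    (fun t ht => hn t ⟨ht.1, ht.2.le⟩)
  exact this ⟨hT, le_rfl⟩

theorem aux_const {f : ℝ → ℝ} (h : ∀ t, 0 ≤ t → HasDerivWithinAt f 0 (Ici 0) t) (T : ℝ)
    (hT : 0 ≤ T) : f T = f 0 := by
  apply le_antisymm
  · exact aux_mono (f' := fun _ => 0) hT (fun t ht => h t ht.1) (fun _ _ => le_rfl)
  · have := aux_mono (f := fun t => - f t) (f' := fun _ => - 0) hT (fun t ht => (h t ht.1).neg)
      (fun _ _ => by simp)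
    simpa using this

theorem aux_quad (S : WaveHyp Γ B c b) {x y : ℝ → H} {x' : H} {t : ℝ} (ht : 0 ≤ t)
    (hm : ∀ s, 0 ≤ s → (x s, y s) ∈ Γ)
    (hx : HasDerivWithinAt x x' (Ici 0) t) (hy : ContinuousWithinAt y (Ici 0) t) :
    HasDerivWithinAt (fun s => ⟪y s, x s⟫) (2 * ⟪y t, x'⟫) (Ici 0) t := by
  rw [hasDerivWithinAt_iff_tendsto_slope] at hx ⊢
  have hy' : Tendsto y (𝓝[Ici 0 \ {t}] t) (𝓝 (y t)) :=
    hy.mono_left (nhdsWithin_mono _ sdiff_subset)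
  have h1 := (hy'.inner (𝕜 := ℝ) hx).add
    (hx.inner (𝕜 := ℝ) (tendsto_const_nhds (x := y t)))
  rw [real_inner_comm (y t) x', ← two_mul] at h1
  refine h1.congr' ?_
  filter_upwards [self_mem_nhdsWithin] with s hs
  have e1 := S.sym _ (hm s hs.1) _ (hm t ht)
  have e2 := S.sym _ (hm t ht) _ (hm t ht)
  simp only at e1 e2
  simp only [slope, vsub_eq_sub, inner_smul_right, inner_smul_left, inner_sub_left, inner_sub_right,
    smul_eq_mul, RCLike.conj_to_real]
  rw [← e1, ← e2]; ring

theorem aux_closed (S : WaveHyp Γ B c b) {x y x' y' : ℝ → H} (h0 : (x 0, y 0) ∈ Γ)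
    (hx : ∀ t, 0 ≤ t → HasDerivWithinAt x (x' t) (Ici 0) t)
    (hy : ∀ t, 0 ≤ t → HasDerivWithinAt y (y' t) (Ici 0) t)
    (hm : ∀ t, 0 ≤ t → (x' t, y' t) ∈ Γ) (t : ℝ) (ht : 0 ≤ t) : (x t, y t) ∈ Γ := by
  apply S.max
  intro p hp
  have := aux_const (f := fun s => ⟪p.2, x s⟫ - ⟪p.1, y s⟫) (fun s hs => by
    have h1 := ((hasDerivWithinAt_const s (Ici 0) p.2).inner ℝ (hx s hs)).sub
      ((hasDerivWithinAt_const s (Ici 0) p.1).inner ℝ (hy s hs))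
    have := S.sym p hp _ (hm s hs)
    simp only at this
    exact h1.congr_deriv (by simp [this])) t ht
  have h2 := S.sym p hp _ h0
  simp only at h2 this
  linarith

theorem aux_prim {E : Type*} [NormedAddCommGroup E] [NormedSpace ℝ E] [CompleteSpace E]
    {f : ℝ → E} (hf : ContinuousOn f (Ici 0)) :
    ∃ F : ℝ → E, F 0 = 0 ∧ ∀ t, 0 ≤ t → HasDerivWithinAt F (f t) (Ici 0) t := by
  have hc : Continuous (fun t : ℝ => f (max t 0)) :=
    hf.comp_continuous (by fun_prop) (fun t => mem_Ici.2 (le_max_right _ _))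
  refine ⟨fun t => ∫ s in (0:ℝ)..t, f (max s 0), by simp, fun t ht => ?_⟩
  have := (hc.integral_hasStrictDerivAt 0 t).hasDerivAt.hasDerivWithinAt (s := Ici 0)
  simpa [max_eq_left ht] using this

theorem aux_e (S : WaveHyp Γ B c b) {u du ddu au : ℝ → H} (hW : IsW Γ B u du ddu au) (t : ℝ)
    (ht : 0 ≤ t) :
    HasDerivWithinAt (fun s => ‖du s‖ ^ 2 + ⟪au s, u s⟫) (- 2 * ⟪B (du t), du t⟫) (Ici 0) t := by
  have h1 := (hW.hdu t ht).norm_sq.add (aux_quad S ht hW.mem (hW.hu t ht) (hW.cont t ht))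
  refine h1.congr_deriv ?_
  rw [hW.eqn t ht, inner_sub_right, inner_neg_right, real_inner_comm (du t) (au t),
    real_inner_comm (du t) (B (du t))]
  ring

theorem aux_B (S : WaveHyp Γ B c b) {u : ℝ → H} {u' : H} {t : ℝ} 
    (hu : HasDerivWithinAt u u' (Ici 0) t) :
    HasDerivWithinAt (fun s => ⟪B (u s), u s⟫) (2 * ⟪B u', u t⟫) (Ici 0) t := by
  have h1 := (B.hasFDerivAt.comp_hasDerivWithinAt t hu).inner ℝ hu
  refine h1.congr_deriv ?_
  simp only [Function.comp_apply]
  rw [S.Bsym (u t), real_inner_comm (B u') (u t)]; ring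

theorem aux_m (S : WaveHyp Γ B c b) {u du ddu au : ℝ → H} (hW : IsW Γ B u du ddu au) (t : ℝ)
    (ht : 0 ≤ t) :
    HasDerivWithinAt (fun s => 2 * ⟪du s, u s⟫ + ⟪B (u s), u s⟫)
      (2 * ‖du t‖ ^ 2 - 2 * ⟪au t, u t⟫) (Ici 0) t := by
  have h1 := (((hW.hdu t ht).inner ℝ (hW.hu t ht)).const_mul 2).add (aux_B S (hW.hu t ht))
  refine h1.congr_deriv ?_
  rw [hW.eqn t ht, inner_sub_left, inner_neg_left, real_inner_self_eq_norm_sq]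
  ring

/-- The Lyapunov functional. -/
noncomputable def GG (c : ℝ) (B : H →L[ℝ] H) (u du au : ℝ → H) (t : ℝ) : ℝ :=
  (2 / c + 1) * (‖du t‖ ^ 2 + ⟪au t, u t⟫) + (2 * ⟪du t, u t⟫ + ⟪B (u t), u t⟫)

/-- The energy. -/
noncomputable def En (u du au : ℝ → H) (t : ℝ) : ℝ := ‖u t‖ ^ 2 + ‖du t‖ ^ 2 + ⟪au t, u t⟫

theorem aux_G (S : WaveHyp Γ B c b) {u du ddu au : ℝ → H} (hW : IsW Γ B u du ddu au) (t : ℝ)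
    (ht : 0 ≤ t) :
    HasDerivWithinAt (GG c B u du au) ((2 / c + 1) * (- 2 * ⟪B (du t), du t⟫) +
      (2 * ‖du t‖ ^ 2 - 2 * ⟪au t, u t⟫)) (Ici 0) t :=
  ((aux_e S hW t ht).const_mul _).add (aux_m S hW t ht)

theorem aux_G' (S : WaveHyp Γ B c b) {u du ddu au : ℝ → H} (hW : IsW Γ B u du ddu au) (t : ℝ)
    (ht : 0 ≤ t) : (2 / c + 1) * (- 2 * ⟪B (du t), du t⟫) +
      (2 * ‖du t‖ ^ 2 - 2 * ⟪au t, u t⟫) ≤ - 2 * (‖du t‖ ^ 2 + ⟪au t, u t⟫) := by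
  have hc := S.hc
  have h1 : (2 / c + 1) * (c * ‖du t‖ ^ 2) ≤ (2 / c + 1) * ⟪B (du t), du t⟫ :=
    mul_le_mul_of_nonneg_left (S.lb _) (by positivity)
  have h2 : (2 / c + 1) * (c * ‖du t‖ ^ 2) = 2 * ‖du t‖ ^ 2 + c * ‖du t‖ ^ 2 := by
    field_simp
  have : 0 ≤ c * ‖du t‖ ^ 2 := by positivity
  linarith

theorem aux_Glb (S : WaveHyp Γ B c b) {u du ddu au : ℝ → H} (hW : IsW Γ B u du ddu au) (t : ℝ)
    (ht : 0 ≤ t) : ‖du t‖ ^ 2 + ⟪au t, u t⟫ + c / 2 * ‖u t‖ ^ 2 ≤ GG c B u du au t := by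
  have hc := S.hc
  unfold GG
  have h1 := S.lb (u t)
  have h2 := S.pos _ (hW.mem t ht)
  have h3 := abs_le.1 (abs_real_inner_le_norm (du t) (u t))
  have h4 : 2 * (‖du t‖ * ‖u t‖) ≤ 2 / c * ‖du t‖ ^ 2 + c / 2 * ‖u t‖ ^ 2 := by
    have : 2 / c * ‖du t‖ ^ 2 + c / 2 * ‖u t‖ ^ 2 - 2 * (‖du t‖ * ‖u t‖)
      = (2 * ‖du t‖ - c * ‖u t‖) ^ 2 / (2 * c) := by field_simp; ring
    have : 0 ≤ (2 * ‖du t‖ - c * ‖u t‖) ^ 2 / (2 * c) := by positivity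
    linarith
  have h5 : 0 ≤ 2 / c * ⟪au t, u t⟫ := mul_nonneg (by positivity) h2
  nlinarith [h3.1]

theorem aux_Bub (S : WaveHyp Γ B c b) (x : H) : ⟪B x, x⟫ ≤ b * ‖x‖ ^ 2 := by
  have h1 := real_inner_le_norm (B x) x
  have h2 := mul_le_mul_of_nonneg_right (S.ub x) (norm_nonneg x)
  nlinarith

theorem aux_Gub (S : WaveHyp Γ B c b) {u du ddu au : ℝ → H} (hW : IsW Γ B u du ddu au) (t : ℝ)
    (ht : 0 ≤ t) : GG c B u du au t ≤ (2 / c + 2 + b) * En u du au t := by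
  have hc := S.hc
  have hb := S.hb
  unfold GG En
  have h1 := aux_Bub S (u t)
  have h2 := S.pos _ (hW.mem t ht)
  have h3 := abs_le.1 (abs_real_inner_le_norm (du t) (u t))
  have h4 : 2 * (‖du t‖ * ‖u t‖) ≤ ‖du t‖ ^ 2 + ‖u t‖ ^ 2 := by
    nlinarith [sq_nonneg (‖du t‖ - ‖u t‖)]
  simp only at h2
  have h5 : 0 ≤ 2 / c * ‖u t‖ ^ 2 := by positivity
  have h6 : 0 ≤ b * ‖du t‖ ^ 2 := by positivity
  have h7 : 0 ≤ b * ⟪au t, u t⟫ := by positivity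
  have h8 : 0 ≤ ‖u t‖ ^ 2 := by positivity
  nlinarith [h3.2]

theorem En_nonneg (S : WaveHyp Γ B c b) {u du ddu au : ℝ → H} (hW : IsW Γ B u du ddu au) (t : ℝ)
    (ht : 0 ≤ t) : 0 ≤ En u du au t := by
  have h2 := S.pos _ (hW.mem t ht)
  unfold En; positivity

theorem wave1 (S : WaveHyp Γ B c b) {u du ddu au : ℝ → H} (hW : IsW Γ B u du ddu au)
    {J : ℝ → ℝ} (hJ0 : J 0 = 0)
    (hJ : ∀ t, 0 ≤ t → HasDerivWithinAt J (t * ‖du t‖ ^ 2) (Ici 0) t) (T : ℝ) (hT : 0 ≤ T) :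
    GG c B u du au T + 2 * c * J T ≤ (2 / c + 2 + b) * En u du au 0 := by
  have hc := S.hc
  have key := aux_mono (f := fun t => GG c B u du au t + t * (‖du t‖ ^ 2 + ⟪au t, u t⟫)
      + 2 * c * J t) hT (fun t ht => ((aux_G S hW t ht.1).add
        ((hasDerivWithinAt_id t (Ici 0)).mul (aux_e S hW t ht.1))).add ((hJ t ht.1).const_mul _))
    (fun t ht => by
      have h1 := aux_G' S hW t ht.1
      have h2 := S.pos _ (hW.mem t ht.1)
      have h3 := mul_le_mul_of_nonneg_left (S.lb (du t)) ht.1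
      have h4 : 0 ≤ ‖du t‖ ^ 2 := by positivity
      simp only [id] at *
      nlinarith)
  have h2 := S.pos _ (hW.mem T hT)
  have h3 := aux_Gub S hW 0 le_rfl
  have h4 : 0 ≤ T * (‖du T‖ ^ 2 + ⟪au T, u T⟫) := by positivity
  simp only [hJ0] at key
  linarith

theorem wave2 (S : WaveHyp Γ B c b) {u du ddu au w aw : ℝ → H} (hW : IsW Γ B u du ddu au)
    (hZ : IsW Γ B du ddu w aw) {J : ℝ → ℝ} (hJ0 : J 0 = 0)
    (hJ : ∀ t, 0 ≤ t → HasDerivWithinAt J (t ^ 3 * ‖ddu t‖ ^ 2) (Ici 0) t) (T : ℝ) (hT : 0 ≤ T) :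
    3 * T ^ 2 * (c / 2 * ‖du T‖ ^ 2) + 2 * c * J T ≤
      3 * (2 / c + 2 + b) ^ 3 * En du ddu aw 0 + 3 * ((2 / c + 2 + b) ^ 2 / c) * En u du au 0 := by
  have hc := S.hc
  have hb := S.hb
  obtain ⟨k, hk⟩ : ∃ k, k = 2 / c + 2 + b := ⟨_, rfl⟩
  have hk0 : 0 < k := by rw [hk]; positivity
  have hd : ∀ t, 0 ≤ t → HasDerivWithinAt (fun t => 3 * ((t ^ 2 + k ^ 2) * GG c B du ddu aw t
      + k / c * (GG c B u du au t + t * (‖du t‖ ^ 2 + ⟪au t, u t⟫)))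
      + t ^ 3 * (‖ddu t‖ ^ 2 + ⟪aw t, du t⟫) + 2 * c * J t) 
      (3 * ((2 * t) * GG c B du ddu aw t + (t ^ 2 + k ^ 2) * ((2 / c + 1) * (- 2 * ⟪B (ddu t), ddu t⟫) +
        (2 * ‖ddu t‖ ^ 2 - 2 * ⟪aw t, du t⟫))
       + k / c * (((2 / c + 1) * (- 2 * ⟪B (du t), du t⟫) +
        (2 * ‖du t‖ ^ 2 - 2 * ⟪au t, u t⟫)) + (1 * (‖du t‖ ^ 2 + ⟪au t, u t⟫) +
          t * (- 2 * ⟪B (du t), du t⟫))))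
       + (3 * t ^ 2 * (‖ddu t‖ ^ 2 + ⟪aw t, du t⟫) + t ^ 3 * (- 2 * ⟪B (ddu t), ddu t⟫))
       + 2 * c * (t ^ 3 * ‖ddu t‖ ^ 2)) (Ici 0) t := by
    intro t ht
    have p2 : HasDerivWithinAt (fun t : ℝ => t ^ 2 + k ^ 2) (2 * t) (Ici 0) t := by
      simpa using (((hasDerivAt_pow 2 t).add_const (k ^ 2)).hasDerivWithinAt (s := Ici 0))
    have p3 : HasDerivWithinAt (fun t : ℝ => t ^ 3) (3 * t ^ 2) (Ici 0) t := by
      simpa using ((hasDerivAt_pow 3 t).hasDerivWithinAt (s := Ici 0))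
    exact ((((p2.mul (aux_G S hZ t ht)).add (((aux_G S hW t ht).add
        ((hasDerivWithinAt_id t (Ici 0)).mul (aux_e S hW t ht))).const_mul (k / c))).const_mul 3).add
        (p3.mul (aux_e S hZ t ht))).add ((hJ t ht).const_mul (2 * c))
  have key := aux_mono hT (fun t ht => hd t ht.1) (fun t ht => by
      have h1 := aux_G' S hW t ht.1
      have h1z := aux_G' S hZ t ht.1
      have h2 := S.pos _ (hW.mem t ht.1)
      have h2z := S.pos _ (hZ.mem t ht.1)
      have h3 := mul_le_mul_of_nonneg_left (S.lb (du t)) ht.1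
      have h3z := mul_le_mul_of_nonneg_left (S.lb (ddu t)) (pow_nonneg ht.1 3)
      have h4 : 0 ≤ ‖du t‖ ^ 2 := by positivity
      have hg := aux_Gub S hZ t ht.1
      rw [← hk] at hg
      unfold En at hg
      simp only at h2 h2z
      have ht0 := ht.1
      generalize ((2 / c + 1) * (- 2 * ⟪B (ddu t), ddu t⟫) +
        (2 * ‖ddu t‖ ^ 2 - 2 * ⟪aw t, du t⟫)) = gz at *
      generalize ((2 / c + 1) * (- 2 * ⟪B (du t), du t⟫) +
        (2 * ‖du t‖ ^ 2 - 2 * ⟪au t, u t⟫)) = g at *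
      generalize GG c B du ddu aw t = G at *
      obtain ⟨e, he⟩ : ∃ e, e = ‖ddu t‖ ^ 2 + ⟪aw t, du t⟫ := ⟨_, rfl⟩
      have he0 : 0 ≤ e := by rw [he]; positivity
      have a1 : (t ^ 2 + k ^ 2) * gz ≤ (t ^ 2 + k ^ 2) * (-2 * e) := by
        rw [he]; exact mul_le_mul_of_nonneg_left h1z (by positivity)
      have a2 : 2 * t * G ≤ 2 * t * (k * (‖du t‖ ^ 2 + e)) := by
        apply mul_le_mul_of_nonneg_left _ (by positivity)
        rw [he]; linarith
      have a3 : k / c * (g + (1 * (‖du t‖ ^ 2 + ⟪au t, u t⟫) +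
          t * (- 2 * ⟪B (du t), du t⟫))) ≤ k / c * (- (2 * c * t * ‖du t‖ ^ 2)) := by
        apply mul_le_mul_of_nonneg_left _ (by positivity)
        linarith
      have a4 : k / c * (- (2 * c * t * ‖du t‖ ^ 2)) = - (2 * k * t * ‖du t‖ ^ 2) := by
        field_simp
      rw [← he]
      have a5 : 0 ≤ (t - k) ^ 2 * e := by positivity
      have a6 : 0 ≤ k ^ 2 * e := by positivity
      nlinarith)
  have h2 := S.pos _ (hW.mem T hT)
  have h2z := S.pos _ (hZ.mem T hT)
  have h3 := aux_Gub S hW 0 le_rfl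
  have h3z := aux_Gub S hZ 0 le_rfl
  have h4 := aux_Glb S hW T hT
  have h4z := aux_Glb S hZ T hT
  have h5 : 0 ≤ T ^ 3 * (‖ddu T‖ ^ 2 + ⟪aw T, du T⟫) := by positivity
  have h6 : 0 ≤ k / c * (GG c B u du au T + T * (‖du T‖ ^ 2 + ⟪au T, u T⟫)) := by
    have : 0 ≤ GG c B u du au T := le_trans (by positivity) h4
    positivity
  have h7 : T ^ 2 * (c / 2 * ‖du T‖ ^ 2) ≤ (T ^ 2 + k ^ 2) * GG c B du ddu aw T := by
    simp only at h2z
    apply mul_le_mul (by nlinarith) (le_trans (by nlinarith [sq_nonneg ‖ddu T‖]) h4z) (by positivity)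
      (by positivity)
  rw [← hk] at h3 h3z ⊢
  have h8 : k ^ 2 * GG c B du ddu aw 0 ≤ k ^ 2 * (k * En du ddu aw 0) :=
    mul_le_mul_of_nonneg_left h3z (by positivity)
  have h9 : k / c * GG c B u du au 0 ≤ k / c * (k * En u du au 0) :=
    mul_le_mul_of_nonneg_left h3 (by positivity)
  simp only [hJ0] at key
  have h10 : k ^ 2 / c * En u du au 0 = k / c * (k * En u du au 0) := by ring
  nlinarith

theorem heat3 (S : WaveHyp Γ B c b) {E D d d' aE aD ad F F' F'' : ℝ → H} {N : ℝ}
    (hE : ∀ t, 0 ≤ t → HasDerivWithinAt E (D t) (Ici 0) t)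
    (hD : ∀ t, 0 ≤ t → HasDerivWithinAt D (d t) (Ici 0) t)
    (hd : ∀ t, 0 ≤ t → HasDerivWithinAt d (d' t) (Ici 0) t)
    (mE : ∀ t, 0 ≤ t → (E t, aE t) ∈ Γ) (mD : ∀ t, 0 ≤ t → (D t, aD t) ∈ Γ)
    (md : ∀ t, 0 ≤ t → (d t, ad t) ∈ Γ)
    (cE : ContinuousOn aE (Ici 0)) (cD : ContinuousOn aD (Ici 0))
    (eE : ∀ t, 0 ≤ t → aE t = F t - B (D t))
    (eD : ∀ t, 0 ≤ t → aD t = F' t - B (d t))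
    (ed : ∀ t, 0 ≤ t → B (d' t) = F'' t - ad t)
    (E0 : E 0 = 0) (hF : ∀ t, 0 ≤ t → ‖F t‖ ^ 2 ≤ N)
    {J1 J3 : ℝ → ℝ} (J10 : J1 0 = 0) (J30 : J3 0 = 0)
    (hJ1 : ∀ t, 0 ≤ t → HasDerivWithinAt J1 (t * ‖F' t‖ ^ 2) (Ici 0) t)
    (hJ3 : ∀ t, 0 ≤ t → HasDerivWithinAt J3 (t ^ 3 * ‖F'' t‖ ^ 2) (Ici 0) t)
    {k1 k2 : ℝ} (hk2 : k2 = (3 * b + 1) / c) (hk1 : k1 = k2 * (b + 1) / c)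
    (T : ℝ) (hT : 0 ≤ T) :
    T ^ 3 * (c * ‖d T‖ ^ 2) ≤ T * (k1 * N / c + (k2 + k2 / c) * J1 T + J3 T) := by
  have hc := S.hc
  have hb := S.hb
  have hk20 : 0 ≤ k2 := by rw [hk2]; positivity
  have hk10 : 0 ≤ k1 := by rw [hk1]; positivity
  have hdd : ∀ t, 0 ≤ t → HasDerivWithinAt (fun t => (k1 * ⟪aE t, E t⟫ + k2 * (t * ⟪B (D t), D t⟫)
      + k2 * (t ^ 2 * ⟪aD t, D t⟫) + t ^ 3 * ⟪B (d t), d t⟫) - (k1 * N / c * t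
       + T * (k2 + k2 / c) * J1 t + T * J3 t))
      ((k1 * (2 * ⟪aE t, D t⟫) + k2 * (1 * ⟪B (D t), D t⟫ + t * (2 * ⟪B (d t), D t⟫))
        + k2 * (2 * t * ⟪aD t, D t⟫ + t ^ 2 * (2 * ⟪aD t, d t⟫))
        + (3 * t ^ 2 * ⟪B (d t), d t⟫ + t ^ 3 * (2 * ⟪B (d' t), d t⟫))) -
        (k1 * N / c * 1 + T * (k2 + k2 / c) * (t * ‖F' t‖ ^ 2) + T * (t ^ 3 * ‖F'' t‖ ^ 2)))
        (Ici 0) t := by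
    intro t ht
    have p1 := hasDerivWithinAt_id t (Ici (0:ℝ))
    have p2 : HasDerivWithinAt (fun t : ℝ => t ^ 2) (2 * t) (Ici 0) t := by
      simpa using ((hasDerivAt_pow 2 t).hasDerivWithinAt (s := Ici 0))
    have p3 : HasDerivWithinAt (fun t : ℝ => t ^ 3) (3 * t ^ 2) (Ici 0) t := by
      simpa using ((hasDerivAt_pow 3 t).hasDerivWithinAt (s := Ici 0))
    exact (((((aux_quad S ht mE (hE t ht) (cE t ht)).const_mul k1).add
      ((p1.mul (aux_B S (hD t ht))).const_mul k2)).add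
      ((p2.mul (aux_quad S ht mD (hD t ht) (cD t ht))).const_mul k2)).add
      (p3.mul (aux_B S (hd t ht)))).sub
      (((p1.const_mul _).add ((hJ1 t ht).const_mul _)).add ((hJ3 t ht).const_mul _))
  have young : ∀ x y : H, ∀ r : ℝ, 0 < r → 2 * ⟪x, y⟫ ≤ ‖x‖ ^ 2 / r + r * ‖y‖ ^ 2 := by
    intro x y r hr
    have h1 := real_inner_le_norm x y
    have : ‖x‖ ^ 2 / r + r * ‖y‖ ^ 2 - 2 * (‖x‖ * ‖y‖) = (‖x‖ - r * ‖y‖) ^ 2 / r := by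
      field_simp; ring
    have : 0 ≤ (‖x‖ - r * ‖y‖) ^ 2 / r := by positivity
    linarith
  have key := aux_mono hT (fun t ht => hdd t ht.1) (fun t ht => by
    obtain ⟨ht0, htT⟩ := ht
    have i1 : 2 * ⟪aE t, D t⟫ ≤ N / c - c * ‖D t‖ ^ 2 := by
      rw [eE t ht0, inner_sub_left]
      have := young (F t) (D t) c hc
      have := S.lb (D t)
      have : ‖F t‖ ^ 2 / c ≤ N / c := by gcongr; exact hF t ht0
      linarith
    have i2 : t * (2 * ⟪B (d t), D t⟫) ≤ t ^ 2 * ‖F' t‖ ^ 2 + ‖D t‖ ^ 2 - 2 * t * ⟪aD t, D t⟫ := by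
      have h1 : B (d t) = F' t - aD t := by rw [eD t ht0]; abel
      rw [h1, inner_sub_left]
      have := young (t • F' t) (D t) 1 one_pos
      rw [inner_smul_left, norm_smul, mul_pow, Real.norm_eq_abs, sq_abs] at this
      simp only [RCLike.conj_to_real, div_one, one_mul] at this
      linarith
    have i3 : 2 * ⟪aD t, d t⟫ ≤ ‖F' t‖ ^ 2 / c - c * ‖d t‖ ^ 2 := by
      rw [eD t ht0, inner_sub_left]
      have := young (F' t) (d t) c hc
      have := S.lb (d t)
      linarith
    have i4 : t ^ 3 * (2 * ⟪B (d' t), d t⟫) ≤ t ^ 4 * ‖F'' t‖ ^ 2 + t ^ 2 * ‖d t‖ ^ 2 := by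
      rw [ed t ht0, inner_sub_left]
      have h1 := young (t • F'' t) (d t) 1 one_pos
      rw [inner_smul_left, norm_smul, mul_pow, Real.norm_eq_abs, sq_abs] at h1
      simp only [RCLike.conj_to_real, div_one, one_mul] at h1
      have h2 := S.pos _ (md t ht0)
      simp only at h2
      have h3 : 0 ≤ t ^ 3 * ⟪ad t, d t⟫ := by positivity
      have h4 := mul_le_mul_of_nonneg_left h1 (sq_nonneg t)
      nlinarith
    have i5 := aux_Bub S (D t)
    have i6 := mul_le_mul_of_nonneg_left (aux_Bub S (d t)) (sq_nonneg t)
    have j1 := mul_le_mul_of_nonneg_left i1 hk10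
    have j2 := mul_le_mul_of_nonneg_left (add_le_add i5 i2) hk20
    have j3 := mul_le_mul_of_nonneg_left (mul_le_mul_of_nonneg_left i3 (sq_nonneg t)) hk20
    have m1 : k1 * c = k2 * (b + 1) := by rw [hk1]; field_simp
    have m2 : k2 * c = 3 * b + 1 := by rw [hk2]; field_simp
    have n1 : k1 * (c * ‖D t‖ ^ 2) = k2 * (b + 1) * ‖D t‖ ^ 2 := by rw [← m1]; ring
    have n2 : k2 * (t ^ 2 * (c * ‖d t‖ ^ 2)) = (3 * b + 1) * (t ^ 2 * ‖d t‖ ^ 2) := by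
      rw [← m2]; ring
    have n3 : (k2 + k2 / c) * (t ^ 2 * ‖F' t‖ ^ 2) ≤ T * (k2 + k2 / c) * (t * ‖F' t‖ ^ 2) := by
      have : 0 ≤ (k2 + k2 / c) * (t * ‖F' t‖ ^ 2) := by positivity
      nlinarith
    have n4 : t ^ 4 * ‖F'' t‖ ^ 2 ≤ T * (t ^ 3 * ‖F'' t‖ ^ 2) := by
      have : 0 ≤ t ^ 3 * ‖F'' t‖ ^ 2 := by positivity
      nlinarith
    have n5 : k2 * (t ^ 2 * (‖F' t‖ ^ 2 / c)) = k2 / c * (t ^ 2 * ‖F' t‖ ^ 2) := by ring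
    have n6 : k1 * (N / c) = k1 * N / c := by ring
    linarith)
  have h1 := S.pos _ (mE T hT)
  have h2 := S.pos _ (mD T hT)
  simp only at h1 h2
  have h3 : 0 ≤ ⟪B (D T), D T⟫ := le_trans (by positivity) (S.lb (D T))
  have h4 : T ^ 3 * (c * ‖d T‖ ^ 2) ≤ T ^ 3 * ⟪B (d T), d T⟫ :=
    mul_le_mul_of_nonneg_left (S.lb _) (by positivity)
  have h5 : 0 ≤ k1 * ⟪aE T, E T⟫ := by positivity
  have h6 : 0 ≤ k2 * (T * ⟪B (D T), D T⟫) := by positivity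
  have h7 : 0 ≤ k2 * (T ^ 2 * ⟪aD T, D T⟫) := by positivity
  simp only [E0, J10, J30, inner_zero_right] at key
  ring_nf at key h4 h5 h6 h7 ⊢
  linarith

theorem aux_mv {f f' : ℝ → H} {R p q : ℝ} (hp : 0 ≤ p) (hpq : p ≤ q)
    (hf : ∀ t, 0 ≤ t → HasDerivWithinAt f (f' t) (Ici 0) t)
    (hR : ∀ t ∈ Icc p q, ‖f' t‖ ≤ R) : ‖f q - f p‖ ≤ R * (q - p) :=
  norm_image_sub_le_of_norm_deriv_le_segment' (f' := f')
    (fun t ht => (hf t (hp.trans ht.1)).mono (fun _ hx => hp.trans hx.1))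
    (fun t ht => hR t ⟨ht.1, ht.2.le⟩) q ⟨hpq, le_rfl⟩

theorem aux_shift {f : ℝ → H} {f' : ℝ → H}
    (hf : ∀ t, 0 ≤ t → HasDerivWithinAt f (f' t) (Ici 0) t) (t : ℝ) (ht : 0 ≤ t) :
    HasDerivWithinAt (fun t => f (t + 1)) (f' (t + 1)) (Ici 0) t := by
  have h1 := hf (t + 1) (by linarith)
  have h2 : HasDerivWithinAt (fun t : ℝ => t + 1) 1 (Ici 0) t :=
    ((hasDerivAt_id t).add_const 1).hasDerivWithinAt
  have := HasDerivWithinAt.scomp t h1 h2 (fun x hx => by simp only [mem_Ici] at *; linarith)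
  exact this.congr_deriv (one_smul _ _)

theorem IsW.shift {u du ddu au : ℝ → H} (hW : IsW Γ B u du ddu au) :
    IsW Γ B (fun t => u (t + 1)) (fun t => du (t + 1)) (fun t => ddu (t + 1))
      (fun t => au (t + 1)) where
  mem t ht := hW.mem _ (by linarith)
  hu := aux_shift hW.hu
  hdu := aux_shift hW.hdu
  cont := hW.cont.comp (by fun_prop) (fun x hx => by simp only [mem_Ici] at *; linarith)
  eqn t ht := hW.eqn _ (by linarith)

theorem IsW.sub {u du ddu au v dv ddv av : ℝ → H} (hW : IsW Γ B u du ddu au)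
    (hV : IsW Γ B v dv ddv av) :
    IsW Γ B (fun t => u t - v t) (fun t => du t - dv t) (fun t => ddu t - ddv t)
      (fun t => au t - av t) where
  mem t ht := Γ.sub_mem (hW.mem t ht) (hV.mem t ht)
  hu t ht := (hW.hu t ht).sub (hV.hu t ht)
  hdu t ht := (hW.hdu t ht).sub (hV.hdu t ht)
  cont := hW.cont.sub hV.cont
  eqn t ht := by
    rw [hW.eqn t ht, hV.eqn t ht, map_sub]; abel

theorem IsW.contd {u du ddu au : ℝ → H} (hW : IsW Γ B u du ddu au) : ContinuousOn du (Ici 0) :=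
  fun t ht => (hW.hdu t ht).continuousWithinAt

theorem aux_nonneg {J j : ℝ → ℝ} (h0 : J 0 = 0)
    (hJ : ∀ t, 0 ≤ t → HasDerivWithinAt J (j t) (Ici 0) t) (hj : ∀ t, 0 ≤ t → 0 ≤ j t)
    (T : ℝ) (hT : 0 ≤ T) : 0 ≤ J T := by
  have := aux_mono (f := fun t => - J t) (f' := fun t => - j t) hT (fun t ht => (hJ t ht.1).neg)
      (fun t ht => by have := hj t ht.1; linarith)
  linarith

theorem wave_bdd (S : WaveHyp Γ B c b) {u du ddu au : ℝ → H} (hW : IsW Γ B u du ddu au)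
    (t : ℝ) (ht : 0 ≤ t) :
    ‖u t‖ ^ 2 ≤ (2 / c + 2 + b) * (1 + 2 / c) * En u du au 0 ∧
    ‖du t‖ ^ 2 ≤ (2 / c + 2 + b) * (1 + 2 / c) * En u du au 0 ∧
    ⟪au t, u t⟫ ≤ (2 / c + 2 + b) * (1 + 2 / c) * En u du au 0 := by
  have hc := S.hc
  have hb := S.hb
  obtain ⟨J, hJ0, hJ⟩ := aux_prim (f := fun t => t * ‖du t‖ ^ 2)
    (continuousOn_id.mul (hW.contd.norm.pow 2))
  have h1 := wave1 S hW hJ0 hJ t ht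
  have h2 := aux_nonneg hJ0 hJ (fun t ht => by positivity) t ht
  have h3 := aux_Glb S hW t ht
  have h4 := S.pos _ (hW.mem t ht)
  simp only at h4
  have h5 := En_nonneg S hW 0 le_rfl
  obtain ⟨X, hX⟩ : ∃ X, X = (2 / c + 2 + b) * En u du au 0 := ⟨_, rfl⟩
  have hX0 : 0 ≤ X := by rw [hX]; positivity
  have e : (2 / c + 2 + b) * (1 + 2 / c) * En u du au 0 = X + 2 / c * X := by rw [hX]; ring
  rw [e]
  rw [← hX] at h1
  have h6 : 0 ≤ c * J t := by positivity
  have h7 : 0 ≤ 2 / c * X := by positivity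
  have h8 : 0 ≤ c / 2 * ‖u t‖ ^ 2 := by positivity
  have h9 : 0 ≤ ‖du t‖ ^ 2 := by positivity
  refine ⟨?_, by linarith, by linarith⟩
  have : c / 2 * ‖u t‖ ^ 2 ≤ X := by linarith
  have : ‖u t‖ ^ 2 ≤ 2 / c * X := by
    have e2 : ‖u t‖ ^ 2 = 2 / c * (c / 2 * ‖u t‖ ^ 2) := by field_simp
    rw [e2]; gcongr
  linarith

theorem quad_sub (S : WaveHyp Γ B c b) {x y x' y' : H} (h : (x, y) ∈ Γ) (h' : (x', y') ∈ Γ) :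
    ⟪y - y', x - x'⟫ ≤ 2 * ⟪y, x⟫ + 2 * ⟪y', x'⟫ := by
  have h1 := S.pos _ (Γ.add_mem h h')
  simp only [Prod.mk_add_mk, inner_add_left, inner_add_right] at h1
  simp only [inner_sub_left, inner_sub_right]
  linarith

theorem En_bound {x dx ddx ax : ℝ → H} (S : WaveHyp Γ B c b) (hX : IsW Γ B x dx ddx ax) {R r1 r2 : ℝ}
    (hR : 0 ≤ R) (h0 : ‖x 0‖ ≤ R) (h1 : ‖dx 0‖ ≤ r1 * R) (h2 : ‖ddx 0‖ ≤ r2 * R) :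
    ⟪ax 0, x 0⟫ ≤ (r2 + b * r1) * R ^ 2 ∧
    En x dx ax 0 ≤ (1 + r1 ^ 2 + r2 + b * r1) * R ^ 2 := by
  have hb := S.hb
  have e1 : ax 0 = - ddx 0 - B (dx 0) := by rw [hX.eqn 0 le_rfl]; abel
  have e2 : ‖ax 0‖ ≤ (r2 + b * r1) * R := by
    rw [e1]
    have := norm_sub_le (- ddx 0) (B (dx 0))
    rw [norm_neg] at this
    have h3 := S.ub (dx 0)
    have h4 := mul_le_mul_of_nonneg_left h1 hb
    linarith
  have e3 : ⟪ax 0, x 0⟫ ≤ (r2 + b * r1) * R ^ 2 := by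
    calc ⟪ax 0, x 0⟫ ≤ ‖ax 0‖ * ‖x 0‖ := real_inner_le_norm _ _
      _ ≤ ((r2 + b * r1) * R) * R := mul_le_mul e2 h0 (norm_nonneg _) ((norm_nonneg _).trans e2)
      _ = _ := by ring
  refine ⟨e3, ?_⟩
  unfold En
  have h3 : ‖x 0‖ ^ 2 ≤ R ^ 2 := by gcongr
  have h4 : ‖dx 0‖ ^ 2 ≤ (r1 * R) ^ 2 := by gcongr
  nlinarith

/-- The final constant. -/
noncomputable def CC (c b : ℝ) : ℝ :=
  ((2 / c + 2 + b) * (1 + 2 / c)) * (2 * ((3 * (2 / c + 2 + b) ^ 3 * (19 + 4 * b) +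
    3 * ((2 / c + 2 + b) ^ 2 / c) * (8 + 2 * b)) * (2 / (3 * c))) +
    2 * (((3 * b + 1) / c * (b + 1) / c * (2 + b) ^ 2 / c +
      ((3 * b + 1) / c + (3 * b + 1) / c / c) * ((2 / c + 2 + b) * (7 + 2 * b) / (2 * c)) +
      (3 * (2 / c + 2 + b) ^ 3 * 12 + 3 * ((2 / c + 2 + b) ^ 2 / c) * (7 + 2 * b)) / (2 * c)) / c))

theorem main_real [CompleteSpace H] (S : WaveHyp Γ B c b) {u du ddu au h dh ah : ℝ → H}
    (hW : IsW Γ B u du ddu au)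
    (hh : ∀ t, 0 ≤ t → HasDerivWithinAt h (dh t) (Ici 0) t)
    (mh : ∀ t, 0 ≤ t → (h t, ah t) ∈ Γ)
    (eh : ∀ t, 0 ≤ t → ah t = - B (dh t))
    (h0 : B (h 0) = B (u 0) + du 0) (T : ℝ) (hT : 0 < T) :
    T ^ 2 * ‖u T - h T‖ ^ 2 ≤ CC c b * En u du au 0 := by
  have hc := S.hc
  have hb := S.hb
  have hEn := En_nonneg S hW 0 le_rfl
  obtain ⟨R, hR, hRM⟩ : ∃ R, 0 ≤ R ∧ R ^ 2 = (2 / c + 2 + b) * (1 + 2 / c) * En u du au 0 :=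
    ⟨_, Real.sqrt_nonneg _, Real.sq_sqrt (by positivity)⟩
  have bu : ∀ t, 0 ≤ t → ‖u t‖ ≤ R := fun t ht =>
    le_of_sq_le_sq (by rw [hRM]; exact (wave_bdd S hW t ht).1) hR
  have bdu : ∀ t, 0 ≤ t → ‖du t‖ ≤ R := fun t ht =>
    le_of_sq_le_sq (by rw [hRM]; exact (wave_bdd S hW t ht).2.1) hR
  have bau : ∀ t, 0 ≤ t → ⟪au t, u t⟫ ≤ R ^ 2 := fun t ht => by
    rw [hRM]; exact (wave_bdd S hW t ht).2.2
  have cu : ContinuousOn u (Ici 0) := fun t ht => (hW.hu t ht).continuousWithinAt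
  have cdu := hW.contd
  obtain ⟨V, V0, hV⟩ := aux_prim cu
  obtain ⟨W, W0, hWW⟩ := aux_prim (f := V) (fun t ht => (hV t ht).continuousWithinAt)
  have hB : ∀ {f f' : ℝ → H}, (∀ t, 0 ≤ t → HasDerivWithinAt f (f' t) (Ici 0) t) →
      ∀ t, 0 ≤ t → HasDerivWithinAt (fun t => B (f t)) (B (f' t)) (Ici 0) t := fun hf t ht =>
    B.hasFDerivAt.comp_hasDerivWithinAt t (hf t ht)
  obtain ⟨z0, hz0⟩ : ∃ z, z = B (u 0) + du 0 := ⟨_, rfl⟩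
  -- first antiderivative
  have mV : ∀ t, 0 ≤ t → (V t, z0 - B (u t) - du t) ∈ Γ := by
    refine aux_closed S (x' := u) (y' := au) ?_ hV (fun t ht => ?_) hW.mem
    · rw [V0, hz0]
      have : B (u 0) + du 0 - B (u 0) - du 0 = 0 := by abel
      rw [this]; exact Γ.zero_mem
    · refine (((hB hW.hu t ht).const_sub z0).sub (hW.hdu t ht)).congr_deriv ?_
      rw [hW.eqn t ht]; abel
  have mW : ∀ t, 0 ≤ t → (W t, t • z0 - B (V t) - u t + u 0) ∈ Γ := by
    refine aux_closed S (x' := V) (y' := fun t => z0 - B (u t) - du t) ?_ hWW (fun t ht => ?_) mV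
    · rw [W0, V0]
      have : (0:ℝ) • z0 - B 0 - u 0 + u 0 = 0 := by simp
      rw [this]; exact Γ.zero_mem
    · have h1 : HasDerivWithinAt (fun t : ℝ => t • z0) z0 (Ici 0) t := by
        simpa using (hasDerivWithinAt_id t (Ici (0:ℝ))).smul_const z0
      exact ((h1.sub (hB hV t ht)).sub (hW.hu t ht)).add_const (u 0)
  have cs : ∀ {f : ℝ → H}, ContinuousOn f (Ici 0) → ContinuousOn (fun t => f (t + 1)) (Ici 0) :=
    fun hf => hf.comp (by fun_prop) (fun x hx => by simp only [mem_Ici] at *; linarith)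
  have caV : ContinuousOn (fun t => z0 - B (u t) - du t) (Ici 0) :=
    (continuousOn_const.sub (B.continuous.comp_continuousOn cu)).sub cdu
  obtain ⟨x, hx⟩ : ∃ x : ℝ → H, x = fun t => V (t + 1) - V t := ⟨_, rfl⟩
  obtain ⟨dx, hdx⟩ : ∃ x : ℝ → H, x = fun t => u (t + 1) - u t := ⟨_, rfl⟩
  obtain ⟨ddx, hddx⟩ : ∃ x : ℝ → H, x = fun t => du (t + 1) - du t := ⟨_, rfl⟩
  obtain ⟨ax, hax⟩ : ∃ x : ℝ → H, x = fun t =>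
    (z0 - B (u (t + 1)) - du (t + 1)) - (z0 - B (u t) - du t) := ⟨_, rfl⟩
  have Wdx : IsW Γ B dx ddx (fun t => ddu (t + 1) - ddu t) (fun t => au (t + 1) - au t) := by rw [hdx, hddx]; exact hW.shift.sub hW
  have Wx : IsW Γ B x dx ddx ax := by
    rw [hx, hdx, hddx, hax]
    exact {
      mem := fun t ht => Γ.sub_mem (mV (t + 1) (by linarith)) (mV t ht)
      hu := fun t ht => (aux_shift hV t ht).sub (hV t ht)
      hdu := fun t ht => (aux_shift hW.hu t ht).sub (hW.hu t ht)
      cont := (cs caV).sub caV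
      eqn := fun t ht => by simp only [map_sub]; abel }
  obtain ⟨U, hU⟩ : ∃ x : ℝ → H, x = fun t => W (t + 1) - W t - V t := ⟨_, rfl⟩
  obtain ⟨aU, haU⟩ : ∃ x : ℝ → H, x = fun t =>
    ((t + 1) • z0 - B (V (t + 1)) - u (t + 1) + u 0) - (t • z0 - B (V t) - u t + u 0)
     - (z0 - B (u t) - du t) := ⟨_, rfl⟩
  obtain ⟨dU, hdU⟩ : ∃ y : ℝ → H, y = fun t => x t - u t := ⟨_, rfl⟩
  obtain ⟨ddU, hddU⟩ : ∃ y : ℝ → H, y = fun t => dx t - du t := ⟨_, rfl⟩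
  have WdU : IsW Γ B dU ddU (fun t => ddx t - ddu t) (fun t => ax t - au t) := by rw [hdU, hddU]; exact Wx.sub hW
  have eaU : ∀ t, aU t = - ddU t - B (dU t) := by
    intro t
    rw [haU, hddU, hdU, hdx, hx]
    simp only [map_sub, add_smul, one_smul]; abel
  have cdU : ContinuousOn dU (Ici 0) := fun t ht => (WdU.hu t ht).continuousWithinAt
  have WU : IsW Γ B U dU ddU aU :=
    { mem := fun t ht => by
        rw [hU, haU]
        exact Γ.sub_mem (Γ.sub_mem (mW (t + 1) (by linarith)) (mW t ht)) (mV t ht)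
      hu := fun t ht => by
        rw [hU, hdU, hx]
        exact ((aux_shift hWW t ht).sub (hWW t ht)).sub (hV t ht)
      hdu := WdU.hu
      cont := by
        have : aU = fun t => - ddU t - B (dU t) := funext eaU
        rw [this]
        exact WdU.contd.neg.sub (B.continuous.comp_continuousOn cdU)
      eqn := fun t ht => by rw [eaU]; abel }
  -- bounds
  have bx : ∀ t, 0 ≤ t → ‖x t‖ ≤ R := fun t ht => by
    have := aux_mv (q := t + 1) ht (by linarith) hV (fun s hs => bu s (ht.trans hs.1))
    rw [hx]; simpa using this
  have bdx : ‖dx 0‖ ≤ 2 * R := by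
    rw [hdx]
    have := norm_sub_le (u (0 + 1)) (u 0)
    have := bu (0 + 1) (by norm_num)
    have := bu 0 le_rfl
    simp only; linarith
  have bddx : ‖ddx 0‖ ≤ 2 * R := by
    rw [hddx]
    have := norm_sub_le (du (0 + 1)) (du 0)
    have := bdu (0 + 1) (by norm_num)
    have := bdu 0 le_rfl
    simp only; linarith
  have bU : ‖U 0‖ ≤ R := by
    have h1 : ∀ t ∈ Icc (0:ℝ) 1, ‖V t‖ ≤ R := fun t ht => by
      have := aux_mv le_rfl ht.1 hV (fun s hs => bu s hs.1)
      rw [V0, sub_zero] at this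
      have h2 := ht.2
      nlinarith
    have := aux_mv le_rfl zero_le_one hWW h1
    rw [hU]; simpa [V0] using this
  have bdU : ‖dU 0‖ ≤ 2 * R := by
    rw [hdU]
    have := norm_sub_le (x 0) (u 0)
    have := bx 0 le_rfl
    have := bu 0 le_rfl
    simp only; linarith
  have bddU : ‖ddU 0‖ ≤ 3 * R := by
    rw [hddU]
    have := norm_sub_le (dx 0) (du 0)
    have := bdu 0 le_rfl
    simp only; linarith
  obtain ⟨qx, Ex⟩ := En_bound S Wx hR (bx 0 le_rfl) bdx bddx
  obtain ⟨qU, EU⟩ := En_bound S WU hR bU bdU bddU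
  have Edx : En dx ddx (fun t => au (t + 1) - au t) 0 ≤ 12 * R ^ 2 := by
    unfold En
    have h1 : ‖dx 0‖ ^ 2 ≤ (2 * R) ^ 2 := by gcongr
    have h2 : ‖ddx 0‖ ^ 2 ≤ (2 * R) ^ 2 := by gcongr
    have h3 := quad_sub S (hW.mem (0 + 1) (by norm_num)) (hW.mem 0 le_rfl)
    have h4 := bau (0 + 1) (by norm_num)
    have h5 := bau 0 le_rfl
    have h6 : dx 0 = u (0 + 1) - u 0 := by rw [hdx]
    rw [← h6] at h3
    simp only
    linarith
  have EdU : En dU ddU (fun t => ax t - au t) 0 ≤ (19 + 4 * b) * R ^ 2 := by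
    unfold En
    have h1 : ‖dU 0‖ ^ 2 ≤ (2 * R) ^ 2 := by gcongr
    have h2 : ‖ddU 0‖ ^ 2 ≤ (3 * R) ^ 2 := by gcongr
    have h3 := quad_sub S (Wx.mem 0 le_rfl) (hW.mem 0 le_rfl)
    have h5 := bau 0 le_rfl
    have h6 : dU 0 = x 0 - u 0 := by rw [hdU]
    rw [← h6] at h3
    simp only
    linarith
  -- the wave part
  obtain ⟨k, hk⟩ : ∃ k, k = 2 / c + 2 + b := ⟨_, rfl⟩
  have hk0 : 0 < k := by rw [hk]; positivity
  have r1 : T ^ 2 * ‖dU T‖ ^ 2 ≤ ((3 * k ^ 3 * (19 + 4 * b) + 3 * (k ^ 2 / c) * (8 + 2 * b))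
      * (2 / (3 * c))) * R ^ 2 := by
    obtain ⟨J, J0, hJ⟩ := aux_prim (f := fun t => t ^ 3 * ‖ddU t‖ ^ 2)
      ((continuousOn_id.pow 3).mul (WdU.contd.norm.pow 2))
    have h1 := wave2 S WU WdU J0 hJ T hT.le
    rw [← hk] at h1
    have h2 := aux_nonneg J0 hJ (fun t ht => by positivity) T hT.le
    have h3 : 3 * k ^ 3 * En dU ddU (fun t => ax t - au t) 0 ≤
      3 * k ^ 3 * ((19 + 4 * b) * R ^ 2) := mul_le_mul_of_nonneg_left EdU (by positivity)
    have h4 : 3 * (k ^ 2 / c) * En U dU aU 0 ≤ 3 * (k ^ 2 / c) * ((8 + 2 * b) * R ^ 2) :=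
      mul_le_mul_of_nonneg_left (by linarith) (by positivity)
    have h5 : 0 ≤ 2 * c * J T := by positivity
    have h6 : T ^ 2 * ‖dU T‖ ^ 2 = (3 * T ^ 2 * (c / 2 * ‖dU T‖ ^ 2)) * (2 / (3 * c)) := by
      field_simp
    have h7 : (3 * T ^ 2 * (c / 2 * ‖dU T‖ ^ 2)) ≤
        (3 * k ^ 3 * (19 + 4 * b) + 3 * (k ^ 2 / c) * (8 + 2 * b)) * R ^ 2 := by linarith
    rw [h6]
    have h8 := mul_le_mul_of_nonneg_right h7 (show 0 ≤ 2 / (3 * c) by positivity)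
    linarith
  -- the comparison with the heat part
  have r2 : T ^ 2 * ‖x T - h T‖ ^ 2 ≤ (((3 * b + 1) / c * (b + 1) / c * (2 + b) ^ 2 / c +
      ((3 * b + 1) / c + (3 * b + 1) / c / c) * (k * (7 + 2 * b) / (2 * c)) +
      (3 * k ^ 3 * 12 + 3 * (k ^ 2 / c) * (7 + 2 * b)) / (2 * c)) / c) * R ^ 2 := by
    obtain ⟨J1, J10, hJ1⟩ := aux_prim (f := fun t => t * ‖dx t‖ ^ 2)
      (continuousOn_id.mul (Wx.contd.norm.pow 2))
    obtain ⟨J3, J30, hJ3⟩ := aux_prim (f := fun t => t ^ 3 * ‖ddx t‖ ^ 2)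
      ((continuousOn_id.pow 3).mul (Wdx.contd.norm.pow 2))
    have b1 : J1 T ≤ k * (7 + 2 * b) / (2 * c) * R ^ 2 := by
      have h1 := wave1 S Wx J10 hJ1 T hT.le
      have h2 := aux_Glb S Wx T hT.le
      have h3 := S.pos _ (Wx.mem T hT.le)
      simp only at h3
      have h4 : 0 ≤ ‖dx T‖ ^ 2 + ⟪ax T, x T⟫ + c / 2 * ‖x T‖ ^ 2 := by positivity
      rw [← hk] at h1
      have h5 : k * En x dx ax 0 ≤ k * ((7 + 2 * b) * R ^ 2) :=
        mul_le_mul_of_nonneg_left (by linarith) hk0.le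
      rw [div_mul_eq_mul_div, le_div_iff₀ (by positivity)]
      linarith
    have b3 : J3 T ≤ (3 * k ^ 3 * 12 + 3 * (k ^ 2 / c) * (7 + 2 * b)) / (2 * c) * R ^ 2 := by
      have h1 := wave2 S Wx Wdx J30 hJ3 T hT.le
      rw [← hk] at h1
      have h3 : 3 * k ^ 3 * En dx ddx (fun t => au (t + 1) - au t) 0 ≤
        3 * k ^ 3 * (12 * R ^ 2) := mul_le_mul_of_nonneg_left Edx (by positivity)
      have h4 : 3 * (k ^ 2 / c) * En x dx ax 0 ≤ 3 * (k ^ 2 / c) * ((7 + 2 * b) * R ^ 2) :=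
        mul_le_mul_of_nonneg_left (by linarith) (by positivity)
      have h5 : 0 ≤ 3 * T ^ 2 * (c / 2 * ‖dx T‖ ^ 2) := by positivity
      rw [div_mul_eq_mul_div, le_div_iff₀ (by positivity)]
      linarith
    have hd : ∀ t, 0 ≤ t → HasDerivWithinAt (fun t => x t - h t) (dx t - dh t) (Ici 0) t :=
      fun t ht => (Wx.hu t ht).sub (hh t ht)
    have md : ∀ t, 0 ≤ t → (x t - h t, ax t - ah t) ∈ Γ := fun t ht =>
      Γ.sub_mem (Wx.mem t ht) (mh t ht)
    obtain ⟨D0, D00, hD0⟩ := aux_prim (f := fun t => x t - h t)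
      (fun t ht => (hd t ht).continuousWithinAt)
    have hD : ∀ t, 0 ≤ t → HasDerivWithinAt (fun t => D0 t + U 0) (x t - h t) (Ici 0) t :=
      fun t ht => (hD0 t ht).add_const _
    obtain ⟨E, E0, hE⟩ := aux_prim (f := fun t => D0 t + U 0)
      (fun t ht => (hD t ht).continuousWithinAt)
    have daD : ∀ t, 0 ≤ t → HasDerivWithinAt (fun t => - dx t - B (x t - h t)) (ax t - ah t)
        (Ici 0) t := fun t ht => by
      refine ((Wx.hdu t ht).neg.sub (hB hd t ht)).congr_deriv ?_
      rw [Wx.eqn t ht, eh t ht, map_sub]; abel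
    have mD : ∀ t, 0 ≤ t → (D0 t + U 0, - dx t - B (x t - h t)) ∈ Γ := by
      refine aux_closed S ?_ hD daD md
      have h1 := WU.mem 0 le_rfl
      have h2 : - dx 0 - B (x 0 - h 0) = aU 0 := by
        rw [eaU, hddU, hdU]; simp only [map_sub, h0]; abel
      rw [D00, h2, zero_add]; exact h1
    have daE : ∀ t, 0 ≤ t → HasDerivWithinAt (fun t => (B (U 0) + x 0 - x t) - B (D0 t + U 0))
        (- dx t - B (x t - h t)) (Ici 0) t := fun t ht =>
      ((Wx.hu t ht).const_sub _).sub (hB hD t ht)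
    have mE : ∀ t, 0 ≤ t → (E t, (B (U 0) + x 0 - x t) - B (D0 t + U 0)) ∈ Γ := by
      refine aux_closed S ?_ hE daE mD
      have : (B (U 0) + x 0 - x 0) - B (D0 0 + U 0) = 0 := by rw [D00, zero_add]; abel
      rw [this, E0]; exact Γ.zero_mem
    have := heat3 S (F := fun t => B (U 0) + x 0 - x t) (F' := fun t => - dx t)
      (F'' := fun t => - ddx t) (N := (2 + b) ^ 2 * R ^ 2) hE hD hd mE mD md
      (fun t ht => (daE t ht).continuousWithinAt) (fun t ht => (daD t ht).continuousWithinAt)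
      (fun _ _ => rfl) (fun _ _ => rfl)
      (fun t ht => by
        rw [map_sub, eh t ht, Wx.eqn t ht]; abel) E0
      (fun t ht => by
        have h1 := norm_sub_le (B (U 0) + x 0) (x t)
        have h2 := norm_add_le (B (U 0)) (x 0)
        have h3 := S.ub (U 0)
        have h4 := mul_le_mul_of_nonneg_left bU hb
        have h5 := bx 0 le_rfl
        have h6 := bx t ht
        rw [← mul_pow]
        exact pow_le_pow_left₀ (norm_nonneg _) (by linarith) 2) J10 J30
      (fun t ht => by simpa only [norm_neg] using hJ1 t ht)
      (fun t ht => by simpa only [norm_neg] using hJ3 t ht) rfl rfl T hT.le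
    obtain ⟨k2, hk2⟩ : ∃ k2, k2 = (3 * b + 1) / c := ⟨_, rfl⟩
    have hk20 : 0 ≤ k2 := by rw [hk2]; positivity
    rw [← hk2] at this ⊢
    have t1 : T ^ 2 * (c * ‖x T - h T‖ ^ 2) ≤
        k2 * (b + 1) / c * ((2 + b) ^ 2 * R ^ 2) / c + (k2 + k2 / c) * J1 T + J3 T := by
      have e : T ^ 3 * (c * ‖x T - h T‖ ^ 2) = T * (T ^ 2 * (c * ‖x T - h T‖ ^ 2)) := by ring
      rw [e] at this
      exact le_of_mul_le_mul_left this hT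
    have t2 : (k2 + k2 / c) * J1 T ≤ (k2 + k2 / c) * (k * (7 + 2 * b) / (2 * c) * R ^ 2) :=
      mul_le_mul_of_nonneg_left b1 (by positivity)
    rw [div_mul_eq_mul_div, le_div_iff₀ hc]
    have t3 : k2 * (b + 1) / c * ((2 + b) ^ 2 * R ^ 2) / c =
      k2 * (b + 1) / c * (2 + b) ^ 2 / c * R ^ 2 := by ring
    linarith
  have r3 : ‖u T - h T‖ ^ 2 ≤ 2 * ‖dU T‖ ^ 2 + 2 * ‖x T - h T‖ ^ 2 := by
    have e : u T - h T = (x T - h T) - dU T := by rw [hdU]; simp only; abel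
    have h1 := norm_sub_le (x T - h T) (dU T)
    rw [← e] at h1
    have h2 : ‖u T - h T‖ ^ 2 ≤ (‖x T - h T‖ + ‖dU T‖) ^ 2 := by gcongr
    nlinarith [sq_nonneg (‖x T - h T‖ - ‖dU T‖)]
  have r4 := mul_le_mul_of_nonneg_left r3 (sq_nonneg T)
  have e : CC c b * En u du au 0 = (2 * ((3 * k ^ 3 * (19 + 4 * b) +
    3 * (k ^ 2 / c) * (8 + 2 * b)) * (2 / (3 * c))) +
    2 * (((3 * b + 1) / c * (b + 1) / c * (2 + b) ^ 2 / c +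
      ((3 * b + 1) / c + (3 * b + 1) / c / c) * (k * (7 + 2 * b) / (2 * c)) +
      (3 * k ^ 3 * 12 + 3 * (k ^ 2 / c) * (7 + 2 * b)) / (2 * c)) / c)) * R ^ 2 := by
    rw [hRM, CC, ← hk]; ring
  rw [e, add_mul]
  linarith

end Aux

open scoped ComplexInnerProductSpace

/-- diffusion approximation with uniform rate `t⁻¹`. -/
theorem stmt5
    {H : Type*} [NormedAddCommGroup H] [InnerProductSpace ℂ H] [CompleteSpace H]
    (A : H →ₗ.[ℂ] H) (hA_sa : IsSelfAdjoint A)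
    (hA_pos : ∀ u : A.domain, u ≠ 0 → 0 < (⟪A u, (u : H)⟫).re)
    (B : H →L[ℂ] H) (hB_sa : IsSelfAdjoint B)
    (c : ℝ) (hc : 0 < c)
    (hB_pos : ∀ u : H, c * ‖u‖ ^ 2 ≤ (⟪B u, u⟫).re)
    -- `Bh` is the positive square root `B^{1/2}` of `B`, `Binvh` its inverse `B^{-1/2}`
    (Bh Binvh : H →L[ℂ] H)
    (hBh_sq : Bh ∘L Bh = B) (hBh_sa : IsSelfAdjoint Bh)
    (hBh_pos : ∀ u : H, 0 ≤ (⟪Bh u, u⟫).re)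
    (hBinv₁ : Binvh ∘L Bh = ContinuousLinearMap.id ℂ H)
    (hBinv₂ : Bh ∘L Binvh = ContinuousLinearMap.id ℂ H)
    -- `B^{±1/2}` map `D(A)` into `D(A)` with the stated bounds
    (hBhD : ∀ u : A.domain, Bh (u : H) ∈ A.domain)
    (hBinvD : ∀ u : A.domain, Binvh (u : H) ∈ A.domain)
    (C₀ : ℝ) (hC₀ : 0 < C₀)
    (hBhA : ∀ u : A.domain, ‖A ⟨Bh (u : H), hBhD u⟩‖ ≤ C₀ * (‖(u : H)‖ + ‖A u‖))
    (hBinvA : ∀ u : A.domain, ‖A ⟨Binvh (u : H), hBinvD u⟩‖ ≤ C₀ * (‖(u : H)‖ + ‖A u‖)) :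
    ∃ C > (0:ℝ), ∀ (sol : DampedWaveSolution A B) (hs : HeatSolution A Binvh),
      hs.v 0 = Bh (sol.u 0) + Binvh (sol.du 0) →
      ∀ t : ℝ, 1 < t →
        ‖sol.u t - Binvh (hs.v t)‖ ≤
          C * t⁻¹ * (‖sol.u 0‖ + Real.sqrt ((⟪sol.Au 0, sol.u 0⟫).re) + ‖sol.du 0‖) := by
  let iR : InnerProductSpace ℝ H := InnerProductSpace.rclikeToReal ℂ H
  have hinner : ∀ x y : H, inner ℝ x y = (⟪x, y⟫).re := fun x y => rfl
  have hdense := hA_sa.dense_domain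
  have hadj : A.adjoint = A := hA_sa
  have hform : ∀ x y : A.domain, ⟪A x, (y : H)⟫ = ⟪(x : H), A y⟫ := by
    have h1 := LinearPMap.adjoint_isFormalAdjoint (T := A) hdense
    rw [hadj] at h1
    exact fun x y => h1 x y
  have S : WaveHyp (A.graph.restrictScalars ℝ) (B.restrictScalars ℝ) c ‖B‖ :=
    { sym := by
        rintro p hp q hq
        rw [Submodule.restrictScalars_mem, LinearPMap.mem_graph_iff] at hp hq
        obtain ⟨x, hx1, hx2⟩ := hp
        obtain ⟨y, hy1, hy2⟩ := hq
        rw [hinner, hinner, ← hx1, ← hx2, ← hy1, ← hy2, hform]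
      max := by
        intro x y hxy
        have h2 : ∀ w : A.domain, ⟪y, (w : H)⟫ = ⟪x, A w⟫ := by
          intro w
          have key : ∀ w : A.domain, (⟪A w, x⟫).re = (⟪(w : H), y⟫).re := fun w => by
            have := hxy ((w : H), A w) (by
              rw [Submodule.restrictScalars_mem]; exact A.mem_graph w)
            rwa [hinner, hinner] at this
          have e1 := key w
          have e2 := key (Complex.I • w)
          rw [LinearPMap.map_smul, Submodule.coe_smul, inner_smul_left, inner_smul_left] at e2
          simp at e2
          have e3 : ⟪A w, x⟫ = ⟪(w : H), y⟫ := Complex.ext e1 e2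
          rw [← inner_conj_symm y, ← inner_conj_symm x, e3]
        have h3 := LinearPMap.mem_adjoint_domain_of_exists (T := A) x ⟨y, h2⟩
        have h4 := LinearPMap.adjoint_apply_eq hdense ⟨x, h3⟩ h2
        have h5 : (x, y) ∈ A.adjoint.graph := by
          rw [← h4]; exact A.adjoint.mem_graph ⟨x, h3⟩
        rw [hadj] at h5
        exact h5
      pos := by
        intro p hp
        rw [Submodule.restrictScalars_mem, LinearPMap.mem_graph_iff] at hp
        obtain ⟨x, hx1, hx2⟩ := hp
        rw [hinner, ← hx1, ← hx2]
        by_cases hx : x = 0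
        · simp [hx]
        · exact (hA_pos x hx).le
      Bsym := fun x y => by
        have := (ContinuousLinearMap.isSelfAdjoint_iff_isSymmetric.1 hB_sa) x y
        rw [hinner, hinner]
        exact congrArg Complex.re this
      hc := hc
      hb := norm_nonneg _
      lb := hB_pos
      ub := fun x => B.le_opNorm x }
  refine ⟨Real.sqrt (CC c ‖B‖) + 1, by positivity, fun sol hs hstart0 t ht => ?_⟩
  have hBB : ∀ x, B (Binvh x) = Bh x := fun x => by
    rw [← hBh_sq, ContinuousLinearMap.comp_apply]
    exact congrArg Bh (DFunLike.congr_fun hBinv₂ x)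
  have hid : ∀ x, Bh (Binvh x) = x := fun x => DFunLike.congr_fun hBinv₂ x
  have hWs : IsW (A.graph.restrictScalars ℝ) (B.restrictScalars ℝ) sol.u sol.du sol.ddu sol.Au :=
    { mem := fun t ht => by
        rw [← sol.hAu t ht]; exact A.mem_graph ⟨sol.u t, sol.mem t ht⟩
      hu := sol.hdu
      hdu := sol.hddu
      cont := sol.cont_Au
      eqn := fun t ht => by
        have := sol.eqn t ht
        have e : sol.ddu t = (sol.ddu t + sol.Au t + B (sol.du t)) - sol.Au t - B (sol.du t) := by
          abel
        rw [this, zero_sub] at e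
        exact e }
  have heq : ∀ (t : ℝ) (ht : 0 ≤ t), A ⟨Binvh (hs.v t), hs.mem t ht⟩ = - Bh (hs.dv t) := by
    intro t ht
    have h1 := congrArg Bh (hs.eqn t ht)
    rw [map_add, hid, map_zero] at h1
    exact eq_neg_of_add_eq_zero_right h1
  have main := main_real S (h := fun t => Binvh (hs.v t)) (dh := fun t => Binvh (hs.dv t))
    (ah := fun t => - Bh (hs.dv t)) hWs
    (fun t ht => (Binvh.restrictScalars ℝ).hasFDerivAt.comp_hasDerivWithinAt t (hs.hdv t ht))
    (fun t ht => by
      rw [← heq t ht]; exact A.mem_graph ⟨Binvh (hs.v t), hs.mem t ht⟩)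
    (fun t ht => by
      rw [ContinuousLinearMap.coe_restrictScalars', hBB])
    (by
      rw [ContinuousLinearMap.coe_restrictScalars', hBB, hstart0, map_add, hid]
      exact congrArg (· + sol.du 0) (DFunLike.congr_fun hBh_sq (sol.u 0))) t (by linarith)
  have ht0 : 0 < t := by linarith
  have ha : 0 ≤ (⟪sol.Au 0, sol.u 0⟫).re := S.pos _ (hWs.mem 0 le_rfl)
  obtain ⟨s, hs1⟩ : ∃ s, s = Real.sqrt ((⟪sol.Au 0, sol.u 0⟫).re) := ⟨_, rfl⟩
  have hs0 : 0 ≤ s := by rw [hs1]; positivity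
  have hs2 : s ^ 2 = (⟪sol.Au 0, sol.u 0⟫).re := by rw [hs1]; exact Real.sq_sqrt ha
  have hEn : En sol.u sol.du sol.Au 0 ≤ (‖sol.u 0‖ + s + ‖sol.du 0‖) ^ 2 := by
    unfold En
    rw [hinner, ← hs2]
    have h1 := mul_nonneg (norm_nonneg (sol.u 0)) hs0
    have h2 := mul_nonneg (norm_nonneg (sol.u 0)) (norm_nonneg (sol.du 0))
    have h3 := mul_nonneg hs0 (norm_nonneg (sol.du 0))
    nlinarith
  rw [← hs1]
  obtain ⟨M, hM⟩ : ∃ M, M = ‖sol.u 0‖ + s + ‖sol.du 0‖ := ⟨_, rfl⟩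
  have hM0 : 0 ≤ M := by rw [hM]; positivity
  rw [← hM] at hEn ⊢
  have hCC : 0 ≤ CC c ‖B‖ := by
    unfold CC
    have := norm_nonneg B
    positivity
  have h5 : (t * ‖sol.u t - Binvh (hs.v t)‖) ^ 2 ≤ (Real.sqrt (CC c ‖B‖) * M) ^ 2 := by
    rw [mul_pow, mul_pow, Real.sq_sqrt hCC]
    exact main.trans (mul_le_mul_of_nonneg_left hEn hCC)
  have h6 := le_of_sq_le_sq h5 (by positivity)
  have h7 : t * ‖sol.u t - Binvh (hs.v t)‖ ≤ (Real.sqrt (CC c ‖B‖) + 1) * M := by linarith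
  have h8 : (Real.sqrt (CC c ‖B‖) + 1) * t⁻¹ * M = (Real.sqrt (CC c ‖B‖) + 1) * M / t := by ring
  rw [h8, le_div_iff₀ ht0]
  linarith
end

section
/- For every strong solution u of the abstract damped wave equation with initial data u(0) = u₀ ∈ D(A), u'(0) = u₁ ∈ H, and every solution v of the associated abstract heat equation with v(0) = B^{1/2}u₀ + B^{-1/2}u₁, one has t·‖u(t) − B^{-1/2}v(t)‖ → 0 as t → ∞. -/
open scoped ComplexInnerProductSpace

namespace DW
open Filter Topology Set
open scoped InnerProductSpace

/-- comparison lemma -/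
lemma cmp (Φ Φ' J j : ℝ → ℝ) (hΦ : ∀ t > 0, HasDerivAt Φ (Φ' t) t)
    (hJ : ∀ t > 0, HasDerivAt J (j t) t) (L : ℝ) (hL : Tendsto J atTop (𝓝 L))
    (κ : ℝ) (hκ : 0 < κ) (hle : ∀ᶠ t in atTop, Φ' t ≤ t ^ 2 * j t + κ * t) :
    ∀ᶠ t in atTop, Φ t ≤ κ * t ^ 2 := by
  have h1 : ∀ᶠ t in atTop, |J t - L| < κ / 16 := by
    have := (hL.sub_const L).abs
    simp only [sub_self, abs_zero] at this
    exact this.eventually (gt_mem_nhds (by positivity))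
  obtain ⟨T, hT⟩ := eventually_atTop.1 ((h1.and hle).and (eventually_ge_atTop 1))
  set Ψ : ℝ → ℝ := fun t => Φ t - t ^ 2 * (J t - L) - (κ / 2 + κ / 8) * t ^ 2 with hΨ
  have hd : ∀ t > 0, HasDerivAt Ψ (Φ' t - (2 * t * (J t - L) + t ^ 2 * j t)
      - (κ / 2 + κ / 8) * (2 * t)) t := by
    intro t ht
    have h2 : HasDerivAt (fun t : ℝ => t ^ 2) (2 * t) t := by simpa using hasDerivAt_pow 2 t
    exact ((hΦ t ht).sub (h2.mul ((hJ t ht).sub_const L))).sub (h2.const_mul _)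
  have hT1 : 1 ≤ T := (hT T le_rfl).2
  have hanti : AntitoneOn Ψ (Ici T) := by
    apply antitoneOn_of_hasDerivWithinAt_nonpos (convex_Ici T)
      (f' := fun t => Φ' t - (2 * t * (J t - L) + t ^ 2 * j t) - (κ / 2 + κ / 8) * (2 * t))
    · intro t ht
      exact (hd t (by linarith [mem_Ici.1 ht])).continuousAt.continuousWithinAt
    · intro t ht
      rw [interior_Ici] at ht
      exact (hd t (by linarith [mem_Ioi.1 ht])).hasDerivWithinAt
    · intro t ht
      rw [interior_Ici] at ht
      have ht' : T ≤ t := le_of_lt ht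
      obtain ⟨⟨ha, hb⟩, hc⟩ := hT t ht'
      have := (abs_lt.1 ha).1
      nlinarith
  have h3 : ∀ᶠ t : ℝ in atTop, Ψ T ≤ κ / 4 * t ^ 2 := by
    have : Tendsto (fun t : ℝ => κ / 4 * t ^ 2) atTop atTop :=
      (tendsto_pow_atTop (by norm_num)).const_mul_atTop (by positivity)
    exact this.eventually_ge_atTop _
  filter_upwards [h3, h1, eventually_ge_atTop T] with t h3 h1 ht
  have := hanti (mem_Ici.2 le_rfl) (mem_Ici.2 ht) ht
  have h5 := (abs_lt.1 h1).2
  simp only [hΨ] at this h3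
  have : t ^ 2 * (J t - L) ≤ t ^ 2 * (κ / 16) := by gcongr
  nlinarith [sq_nonneg t]

lemma cmp0 (Φ Φ' : ℝ → ℝ) (hΦ : ∀ t > 0, HasDerivAt Φ (Φ' t) t)
    (κ : ℝ) (hκ : 0 < κ) (hle : ∀ᶠ t in atTop, Φ' t ≤ κ * t) :
    ∀ᶠ t in atTop, Φ t ≤ κ * t ^ 2 :=
  cmp Φ Φ' (fun _ => 0) (fun _ => 0) hΦ (fun t _ => hasDerivAt_const _ _) 0 tendsto_const_nhds κ hκ
    (by simpa using hle)

/-- constant comparison -/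
lemma cmp1 (Φ Φ' : ℝ → ℝ) (hΦ : ∀ t > 0, HasDerivAt Φ (Φ' t) t)
    (κ : ℝ) (hκ : 0 < κ) (hle : ∀ᶠ t in atTop, Φ' t ≤ κ) :
    ∀ᶠ t in atTop, Φ t ≤ 2 * κ * t := by
  obtain ⟨T, hT⟩ := eventually_atTop.1 (hle.and (eventually_ge_atTop 1))
  have hT1 : 1 ≤ T := (hT T le_rfl).2
  have hanti : AntitoneOn (fun t => Φ t - κ * t) (Ici T) := by
    apply antitoneOn_of_hasDerivWithinAt_nonpos (convex_Ici T) (f' := fun t => Φ' t - κ * 1)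
    · intro t ht
      exact ((hΦ t (by linarith [mem_Ici.1 ht])).sub
        ((hasDerivAt_id t).const_mul κ)).continuousAt.continuousWithinAt
    · intro t ht
      rw [interior_Ici] at ht
      exact ((hΦ t (by linarith [mem_Ioi.1 ht])).sub
        ((hasDerivAt_id t).const_mul κ)).hasDerivWithinAt
    · intro t ht
      rw [interior_Ici] at ht
      linarith [(hT t (le_of_lt ht)).1]
  have h3 : ∀ᶠ t : ℝ in atTop, Φ T - κ * T ≤ κ * t := by
    have : Tendsto (fun t : ℝ => κ * t) atTop atTop := tendsto_id.const_mul_atTop hκ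
    exact this.eventually_ge_atTop _
  filter_upwards [h3, eventually_ge_atTop T] with t h3 ht
  have := hanti (mem_Ici.2 le_rfl) (mem_Ici.2 ht) ht
  simp only at this
  linarith


section
variable {H : Type*} [NormedAddCommGroup H] [InnerProductSpace ℝ H]

lemma derivB (B : H →L[ℝ] H) (hB : ∀ x y, ⟪B x, y⟫_ℝ = ⟪x, B y⟫_ℝ) {z : ℝ → H} {y : H} {t : ℝ}
    (hz : HasDerivAt z y t) :
    HasDerivAt (fun s => ⟪B (z s), z s⟫_ℝ) (2 * ⟪B y, z t⟫_ℝ) t := by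
  have h1 : HasDerivAt (fun s => B (z s)) (B y) t := B.hasFDerivAt.comp_hasDerivAt t hz
  refine (h1.inner ℝ hz).congr_deriv ?_
  rw [hB (z t) y, real_inner_comm]; ring

lemma derivA (G : H → H → Prop) (hG : ∀ x a y b, G x a → G y b → ⟪a, y⟫_ℝ = ⟪x, b⟫_ℝ)
    {z a : ℝ → H} {y : H} {t : ℝ} (hz : HasDerivAt z y t) (ha : ContinuousAt a t)
    (hza : ∀ᶠ s in 𝓝 t, G (z s) (a s)) :
    HasDerivAt (fun s => ⟪a s, z s⟫_ℝ) (2 * ⟪a t, y⟫_ℝ) t := by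
  rw [hasDerivAt_iff_tendsto_slope] at hz ⊢
  have h1 : Tendsto (fun s => ⟪a s + a t, slope z t s⟫_ℝ) (𝓝[≠] t) (𝓝 ⟪a t + a t, y⟫_ℝ) :=
    (((ha.tendsto.mono_left nhdsWithin_le_nhds).add_const (a t))).inner hz
  have e : ⟪a t + a t, y⟫_ℝ = 2 * ⟪a t, y⟫_ℝ := by rw [inner_add_left]; ring
  rw [e] at h1
  refine h1.congr' ?_
  have h0 := hza.self_of_nhds
  filter_upwards [nhdsWithin_le_nhds hza] with s hs
  rw [slope_def_module, slope_def_module, inner_smul_right, smul_eq_mul]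
  congr 1
  rw [inner_add_left, inner_sub_right, inner_sub_right]
  have := hG _ _ _ _ hs h0
  rw [this, real_inner_comm (a t) (z s)]; ring

lemma cs (x y : H) : |⟪x, y⟫_ℝ| ≤ ‖x‖ * ‖y‖ := abs_real_inner_le_norm x y

/-- first parabolic step -/
lemma stepS (B : H →L[ℝ] H) (hB : ∀ x y, ⟪B x, y⟫_ℝ = ⟪x, B y⟫_ℝ) (c : ℝ) (hc : 0 < c)
    (hBc : ∀ x, c * ‖x‖ ^ 2 ≤ ⟪B x, x⟫_ℝ)
    (G : H → H → Prop) (hG : ∀ x a y b, G x a → G y b → ⟪a, y⟫_ℝ = ⟪x, b⟫_ℝ)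
    (hG0 : ∀ x a, G x a → 0 ≤ ⟪a, x⟫_ℝ)
    (z y dy a b g h : ℝ → H)
    (hz : ∀ t > 0, HasDerivAt z (y t) t) (hy : ∀ t > 0, HasDerivAt y (dy t) t)
    (ha : ∀ t > 0, ContinuousAt a t)
    (hza : ∀ t > 0, G (z t) (a t)) (hyb : ∀ t > 0, G (y t) (b t))
    (e1 : ∀ t > 0, B (y t) + a t = g t) (e2 : ∀ t > 0, B (dy t) + b t = h t)
    (ε : ℝ) (hε : 0 < ε) (hg : ∀ᶠ t in atTop, ‖g t‖ ≤ ε) (hh : ∀ᶠ t in atTop, t * ‖h t‖ ≤ ε) :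
    ∀ᶠ t in atTop, ⟪B (y t), y t⟫_ℝ ≤ 10 * ε ^ 2 / c := by
  have dp : ∀ t > 0, HasDerivAt (fun s => ⟪B (z s), z s⟫_ℝ) (2 * ⟪B (y t), z t⟫_ℝ) t :=
    fun t ht => derivB B hB (hz t ht)
  have dr : ∀ t > 0, HasDerivAt (fun s => ⟪B (y s), y s⟫_ℝ) (2 * ⟪B (dy t), y t⟫_ℝ) t :=
    fun t ht => derivB B hB (hy t ht)
  have dq : ∀ t > 0, HasDerivAt (fun s => ⟪a s, z s⟫_ℝ) (2 * ⟪a t, y t⟫_ℝ) t :=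
    fun t ht => derivA G hG (hz t ht) (ha t ht)
      (by filter_upwards [lt_mem_nhds ht] with s hs using hza s hs)
  -- identities
  have i1 : ∀ t > 0, ⟪B (y t), z t⟫_ℝ = ⟪g t, z t⟫_ℝ - ⟪a t, z t⟫_ℝ := fun t ht => by
    rw [← e1 t ht, inner_add_left]; ring
  have i2 : ∀ t > 0, ⟪B (dy t), y t⟫_ℝ = ⟪h t, y t⟫_ℝ - ⟪b t, y t⟫_ℝ := fun t ht => by
    rw [← e2 t ht, inner_add_left]; ring
  have i3 : ∀ t > 0, ⟪a t, y t⟫_ℝ = ⟪g t, y t⟫_ℝ - ⟪B (y t), y t⟫_ℝ := fun t ht => by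
    rw [← e1 t ht, inner_add_left]; ring
  -- growth of z
  have hz1 : ∀ᶠ t in atTop, ‖z t‖ ≤ 2 * ε / c * t := by
    have := cmp1 (fun t => ⟪B (z t), z t⟫_ℝ * t⁻¹)
      (fun t => 2 * ⟪B (y t), z t⟫_ℝ * t⁻¹ + ⟪B (z t), z t⟫_ℝ * (-(t ^ 2)⁻¹))
      (fun t ht => (dp t ht).mul (hasDerivAt_inv ht.ne')) (ε ^ 2 / c) (by positivity) ?_
    · filter_upwards [this, eventually_gt_atTop 0] with t h1 ht
      have h2 : ⟪B (z t), z t⟫_ℝ ≤ 2 * (ε ^ 2 / c) * t * t := by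
        rwa [← div_eq_mul_inv, div_le_iff₀ ht] at h1
      have h3 := hBc (z t)
      have : ‖z t‖ ^ 2 ≤ (2 * ε / c * t) ^ 2 := by
        have : c * ‖z t‖ ^ 2 ≤ c * (2 * ε / c * t) ^ 2 := by
          calc c * ‖z t‖ ^ 2 ≤ 2 * (ε ^ 2 / c) * t * t := by linarith
            _ ≤ 4 * (ε ^ 2 / c) * t * t := by
              have : 0 ≤ (ε ^ 2 / c) * t * t := by positivity
              linarith
            _ = _ := by field_simp; ring
        exact le_of_mul_le_mul_left this hc
      exact (pow_le_pow_iff_left₀ (norm_nonneg _) (by positivity) two_ne_zero).1 this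
    · filter_upwards [hg, eventually_gt_atTop 0] with t hg ht
      rw [i1 t ht]
      have h1 := hG0 _ _ (hza t ht)
      have h2 := (abs_le.1 (cs (g t) (z t))).2
      have h3 := hBc (z t)
      have h4 : ‖g t‖ * ‖z t‖ ≤ ε * ‖z t‖ := by gcongr
      have h5 : 2 * (⟪g t, z t⟫_ℝ - ⟪a t, z t⟫_ℝ) * t⁻¹ ≤ 2 * (ε * ‖z t‖) * t⁻¹ := by
        gcongr; linarith
      have h6 : c * ‖z t‖ ^ 2 * (t ^ 2)⁻¹ ≤ ⟪B (z t), z t⟫_ℝ * (t ^ 2)⁻¹ := by gcongr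
      have h7 : 2 * (ε * ‖z t‖) * t⁻¹ ≤ ε ^ 2 / c + c * ‖z t‖ ^ 2 * (t ^ 2)⁻¹ := by
        have : 0 ≤ (ε - c * ‖z t‖ * t⁻¹) ^ 2 / c := by positivity
        have e : (ε - c * ‖z t‖ * t⁻¹) ^ 2 / c =
          ε ^ 2 / c + c * ‖z t‖ ^ 2 * (t ^ 2)⁻¹ - 2 * (ε * ‖z t‖) * t⁻¹ := by
          field_simp; ring
        linarith
      linarith
  have key := cmp0 (fun t => t ^ 2 * ⟪B (y t), y t⟫_ℝ + 3 * (t * ⟪a t, z t⟫_ℝ + ⟪B (z t), z t⟫_ℝ / 2))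
    (fun t => (2 * t * ⟪B (y t), y t⟫_ℝ + t ^ 2 * (2 * ⟪B (dy t), y t⟫_ℝ)) +
      3 * ((1 * ⟪a t, z t⟫_ℝ + t * (2 * ⟪a t, y t⟫_ℝ)) + (2 * ⟪B (y t), z t⟫_ℝ) / 2)) ?_
    (10 * ε ^ 2 / c) (by positivity) ?_
  · filter_upwards [key, eventually_gt_atTop 0] with t h1 ht
    have h2 := hG0 _ _ (hza t ht)
    have h3 := hBc (z t)
    have h4 : 0 ≤ c * ‖z t‖ ^ 2 := by positivity
    have h5 : 0 ≤ t * ⟪a t, z t⟫_ℝ := by positivity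
    have h6 : t ^ 2 * ⟪B (y t), y t⟫_ℝ ≤ t ^ 2 * (10 * ε ^ 2 / c) := by linarith
    exact le_of_mul_le_mul_left h6 (by positivity)
  · intro t ht
    have h2 : HasDerivAt (fun t : ℝ => t ^ 2) (2 * t) t := by simpa using hasDerivAt_pow 2 t
    exact (h2.mul (dr t ht)).add
      ((((hasDerivAt_id t).mul (dq t ht)).add ((dp t ht).div_const 2)).const_mul 3)
  · filter_upwards [hg, hh, hz1, eventually_gt_atTop 0] with t hg hh hz1 ht
    rw [i1 t ht, i2 t ht, i3 t ht]
    have h1 := hG0 _ _ (hyb t ht)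
    have h2 := (abs_le.1 (cs (g t) (z t))).2
    have h3 := (abs_le.1 (cs (g t) (y t))).2
    have h4 := (abs_le.1 (cs (h t) (y t))).2
    have h5 := hBc (y t)
    have h6 : ‖g t‖ * ‖z t‖ ≤ ε * (2 * ε / c * t) := by gcongr
    have h7 : ‖g t‖ * ‖y t‖ ≤ ε * ‖y t‖ := by gcongr
    have h8 : t * ‖h t‖ * ‖y t‖ ≤ ε * ‖y t‖ := by gcongr
    have h9 : 2 * (ε * ‖y t‖) ≤ ε ^ 2 / c + c * ‖y t‖ ^ 2 := by
      have : 0 ≤ (ε - c * ‖y t‖) ^ 2 / c := by positivity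
      have e : (ε - c * ‖y t‖) ^ 2 / c = ε ^ 2 / c + c * ‖y t‖ ^ 2 - 2 * (ε * ‖y t‖) := by
        field_simp; ring
      linarith
    have j1 : t * (2 * (t * ⟪h t, y t⟫_ℝ)) ≤ t * (ε ^ 2 / c + ⟪B (y t), y t⟫_ℝ) := by
      gcongr
      have : t * ⟪h t, y t⟫_ℝ ≤ t * (‖h t‖ * ‖y t‖) := by gcongr
      linarith
    have j2 : t * (2 * ⟪g t, y t⟫_ℝ) ≤ t * (ε ^ 2 / c + ⟪B (y t), y t⟫_ℝ) := by
      gcongr; linarith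
    have j3 : 0 ≤ t ^ 2 * ⟪b t, y t⟫_ℝ := by positivity
    have j4 : ⟪g t, z t⟫_ℝ ≤ 2 * (ε ^ 2 / c) * t := by
      calc _ ≤ _ := h2.trans h6
        _ = _ := by ring
    have j5 : 10 * ε ^ 2 / c * t = 10 * (t * (ε ^ 2 / c)) := by ring
    rw [j5]
    nlinarith

/-- second parabolic step -/
lemma stepS2 (B : H →L[ℝ] H) (hB : ∀ x y, ⟪B x, y⟫_ℝ = ⟪x, B y⟫_ℝ) (c : ℝ) (hc : 0 < c)
    (hBc : ∀ x, c * ‖x‖ ^ 2 ≤ ⟪B x, x⟫_ℝ)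
    (G : H → H → Prop) (hG : ∀ x a y b, G x a → G y b → ⟪a, y⟫_ℝ = ⟪x, b⟫_ℝ)
    (hG0 : ∀ x a, G x a → 0 ≤ ⟪a, x⟫_ℝ)
    (y e de a b h k : ℝ → H)
    (hy : ∀ t > 0, HasDerivAt y (e t) t) (he : ∀ t > 0, HasDerivAt e (de t) t)
    (ha : ∀ t > 0, ContinuousAt a t)
    (hya : ∀ t > 0, G (y t) (a t)) (heb : ∀ t > 0, G (e t) (b t))
    (e1 : ∀ t > 0, B (e t) + a t = h t) (e2 : ∀ t > 0, B (de t) + b t = k t)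
    (δ : ℝ) (hδ : 0 < δ) (hh : ∀ᶠ t in atTop, t * ‖h t‖ ≤ δ)
    (hr : ∀ᶠ t in atTop, ⟪B (y t), y t⟫_ℝ ≤ δ ^ 2)
    (J : ℝ → ℝ) (hJ : ∀ t > 0, HasDerivAt J (t ^ 3 * ‖k t‖ ^ 2) t) (L : ℝ)
    (hL : Tendsto J atTop (𝓝 L)) :
    ∀ᶠ t in atTop, t ^ 2 * ⟪B (e t), e t⟫_ℝ ≤ 5 * δ ^ 2 * (6 + 4 / c) := by
  have dr : ∀ t > 0, HasDerivAt (fun s => ⟪B (y s), y s⟫_ℝ) (2 * ⟪B (e t), y t⟫_ℝ) t :=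
    fun t ht => derivB B hB (hy t ht)
  have dm : ∀ t > 0, HasDerivAt (fun s => ⟪B (e s), e s⟫_ℝ) (2 * ⟪B (de t), e t⟫_ℝ) t :=
    fun t ht => derivB B hB (he t ht)
  have dq : ∀ t > 0, HasDerivAt (fun s => ⟪a s, y s⟫_ℝ) (2 * ⟪a t, e t⟫_ℝ) t :=
    fun t ht => derivA G hG (hy t ht) (ha t ht)
      (by filter_upwards [lt_mem_nhds ht] with s hs using hya s hs)
  have i1 : ∀ t > 0, ⟪B (e t), y t⟫_ℝ = ⟪h t, y t⟫_ℝ - ⟪a t, y t⟫_ℝ := fun t ht => by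
    rw [← e1 t ht, inner_add_left]; ring
  have i2 : ∀ t > 0, ⟪B (de t), e t⟫_ℝ = ⟪k t, e t⟫_ℝ - ⟪b t, e t⟫_ℝ := fun t ht => by
    rw [← e2 t ht, inner_add_left]; ring
  have i3 : ∀ t > 0, ⟪a t, e t⟫_ℝ = ⟪h t, e t⟫_ℝ - ⟪B (e t), e t⟫_ℝ := fun t ht => by
    rw [← e1 t ht, inner_add_left]; ring
  have key := cmp (fun t => t ^ 4 * ⟪B (e t), e t⟫_ℝ +
      5 * (t ^ 3 * ⟪a t, y t⟫_ℝ + 3 / 2 * (t ^ 2 * ⟪B (y t), y t⟫_ℝ)))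
    (fun t => (4 * t ^ 3 * ⟪B (e t), e t⟫_ℝ + t ^ 4 * (2 * ⟪B (de t), e t⟫_ℝ)) +
      5 * ((3 * t ^ 2 * ⟪a t, y t⟫_ℝ + t ^ 3 * (2 * ⟪a t, e t⟫_ℝ)) +
        3 / 2 * (2 * t * ⟪B (y t), y t⟫_ℝ + t ^ 2 * (2 * ⟪B (e t), y t⟫_ℝ))))
    (fun t => J t / c) (fun t => t ^ 3 * ‖k t‖ ^ 2 / c) ?_ (fun t ht => (hJ t ht).div_const c)
    (L / c) (hL.div_const c) (5 * δ ^ 2 * (6 + 4 / c)) (by positivity) ?_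
  · filter_upwards [key, eventually_gt_atTop 0] with t h1 ht
    have h2 := hG0 _ _ (hya t ht)
    have h3 := hBc (y t)
    have h4 : 0 ≤ ⟪B (y t), y t⟫_ℝ := le_trans (by positivity) h3
    have h5 : 0 ≤ t ^ 3 * ⟪a t, y t⟫_ℝ := by positivity
    have h5' : 0 ≤ t ^ 2 * ⟪B (y t), y t⟫_ℝ := by positivity
    have h6 : t ^ 2 * (t ^ 2 * ⟪B (e t), e t⟫_ℝ) ≤ t ^ 2 * (5 * δ ^ 2 * (6 + 4 / c)) := by
      calc _ = t ^ 4 * ⟪B (e t), e t⟫_ℝ := by ring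
        _ ≤ _ := by linarith
    exact le_of_mul_le_mul_left h6 (by positivity)
  · intro t ht
    have h2 : HasDerivAt (fun t : ℝ => t ^ 2) (2 * t) t := by simpa using hasDerivAt_pow 2 t
    have h3 : HasDerivAt (fun t : ℝ => t ^ 3) (3 * t ^ 2) t := by simpa using hasDerivAt_pow 3 t
    have h4 : HasDerivAt (fun t : ℝ => t ^ 4) (4 * t ^ 3) t := by simpa using hasDerivAt_pow 4 t
    exact (h4.mul (dm t ht)).add
      (((h3.mul (dq t ht)).add ((h2.mul (dr t ht)).const_mul (3/2))).const_mul 5)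
  · filter_upwards [hh, hr, eventually_gt_atTop 0] with t hh hr ht
    rw [i1 t ht, i2 t ht, i3 t ht]
    have h1 := hG0 _ _ (heb t ht)
    have h2 := (abs_le.1 (cs (h t) (y t))).2
    have h3 := (abs_le.1 (cs (h t) (e t))).2
    have h4 := (abs_le.1 (cs (k t) (e t))).2
    have h5 := hBc (y t)
    have h6 := hBc (e t)
    have j1 : 2 * t ^ 4 * ⟪k t, e t⟫_ℝ ≤ t ^ 3 * ⟪B (e t), e t⟫_ℝ + t ^ 2 * (t ^ 3 * ‖k t‖ ^ 2 / c) := by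
      have : 0 ≤ t ^ 3 * ((t * ‖k t‖ - c * ‖e t‖) ^ 2 / c) := by positivity
      have e' : t ^ 3 * ((t * ‖k t‖ - c * ‖e t‖) ^ 2 / c) =
          t ^ 2 * (t ^ 3 * ‖k t‖ ^ 2 / c) + t ^ 3 * (c * ‖e t‖ ^ 2)
            - 2 * t ^ 4 * (‖k t‖ * ‖e t‖) := by
        field_simp; ring
      have a1 : t ^ 3 * (c * ‖e t‖ ^ 2) ≤ t ^ 3 * ⟪B (e t), e t⟫_ℝ := by gcongr
      have a2 : 2 * t ^ 4 * ⟪k t, e t⟫_ℝ ≤ 2 * t ^ 4 * (‖k t‖ * ‖e t‖) := by gcongr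
      linarith
    have j2 : 2 * t ^ 3 * ⟪h t, e t⟫_ℝ ≤ t ^ 3 * ⟪B (e t), e t⟫_ℝ + δ ^ 2 / c * t := by
      have : 0 ≤ t ^ 3 * ((‖h t‖ - c * ‖e t‖) ^ 2 / c) := by positivity
      have e' : t ^ 3 * ((‖h t‖ - c * ‖e t‖) ^ 2 / c) =
          (t * ‖h t‖) ^ 2 / c * t + t ^ 3 * (c * ‖e t‖ ^ 2)
            - 2 * t ^ 3 * (‖h t‖ * ‖e t‖) := by
        field_simp; ring
      have a1 : t ^ 3 * (c * ‖e t‖ ^ 2) ≤ t ^ 3 * ⟪B (e t), e t⟫_ℝ := by gcongr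
      have a2 : 2 * t ^ 3 * ⟪h t, e t⟫_ℝ ≤ 2 * t ^ 3 * (‖h t‖ * ‖e t‖) := by gcongr
      have a3 : (t * ‖h t‖) ^ 2 / c * t ≤ δ ^ 2 / c * t := by gcongr
      linarith
    have j3 : 2 * t ^ 2 * ⟪h t, y t⟫_ℝ ≤ t * δ ^ 2 + δ ^ 2 / c * t := by
      have : 0 ≤ t * ((t * ‖h t‖ - c * ‖y t‖) ^ 2 / c) := by positivity
      have e' : t * ((t * ‖h t‖ - c * ‖y t‖) ^ 2 / c) =
          (t * ‖h t‖) ^ 2 / c * t + t * (c * ‖y t‖ ^ 2)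
            - 2 * t ^ 2 * (‖h t‖ * ‖y t‖) := by
        field_simp; ring
      have a1 : t * (c * ‖y t‖ ^ 2) ≤ t * δ ^ 2 := by gcongr; linarith
      have a2 : 2 * t ^ 2 * ⟪h t, y t⟫_ℝ ≤ 2 * t ^ 2 * (‖h t‖ * ‖y t‖) := by gcongr
      have a3 : (t * ‖h t‖) ^ 2 / c * t ≤ δ ^ 2 / c * t := by gcongr
      linarith
    have j4 : t * ⟪B (y t), y t⟫_ℝ ≤ t * δ ^ 2 := by gcongr
    have j5 : 0 ≤ t ^ 4 * ⟪b t, e t⟫_ℝ := by positivity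
    have j6 : 5 * δ ^ 2 * (6 + 4 / c) * t = 30 * (t * δ ^ 2) + 20 * (δ ^ 2 / c * t) := by ring
    have j7 : 0 ≤ δ ^ 2 / c * t := by positivity
    have j8 : 0 ≤ t * δ ^ 2 := by positivity
    rw [j6]
    linarith
end

section
variable {H : Type*} [NormedAddCommGroup H] [InnerProductSpace ℝ H]

lemma waveE (B : H →L[ℝ] H)
    (G : H → H → Prop) (hG : ∀ x a y b, G x a → G y b → ⟪a, y⟫_ℝ = ⟪x, b⟫_ℝ)
    (u du ddu a : ℝ → H)
    (hu : ∀ t > 0, HasDerivAt u (du t) t) (hdu : ∀ t > 0, HasDerivAt du (ddu t) t)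
    (ha : ∀ t > 0, ContinuousAt a t) (hua : ∀ t > 0, G (u t) (a t))
    (heq : ∀ t > 0, ddu t + a t + B (du t) = 0) (t : ℝ) (ht : 0 < t) :
    HasDerivAt (fun s => ‖du s‖ ^ 2 + ⟪a s, u s⟫_ℝ) (-2 * ⟪B (du t), du t⟫_ℝ) t := by
  have h1 := (hdu t ht).norm_sq
  have h2 := derivA G hG (hu t ht) (ha t ht)
      (by filter_upwards [lt_mem_nhds ht] with s hs using hua s hs)
  refine (h1.add h2).congr_deriv ?_
  have : ⟪ddu t + a t + B (du t), du t⟫_ℝ = 0 := by rw [heq t ht, inner_zero_left]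
  rw [inner_add_left, inner_add_left] at this
  rw [real_inner_comm]
  linarith

lemma waveX (B : H →L[ℝ] H) (hB : ∀ x y, ⟪B x, y⟫_ℝ = ⟪x, B y⟫_ℝ)
    (u du ddu a : ℝ → H)
    (hu : ∀ t > 0, HasDerivAt u (du t) t) (hdu : ∀ t > 0, HasDerivAt du (ddu t) t)
    (heq : ∀ t > 0, ddu t + a t + B (du t) = 0) (t : ℝ) (ht : 0 < t) :
    HasDerivAt (fun s => 2 * ⟪du s, u s⟫_ℝ + ⟪B (u s), u s⟫_ℝ) (2 * ‖du t‖ ^ 2 - 2 * ⟪a t, u t⟫_ℝ) t := by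
  have h1 := ((hdu t ht).inner ℝ (hu t ht)).const_mul 2
  have h2 := derivB B hB (hu t ht)
  refine (h1.add h2).congr_deriv ?_
  have : ⟪ddu t + a t + B (du t), u t⟫_ℝ = 0 := by rw [heq t ht, inner_zero_left]
  rw [inner_add_left, inner_add_left] at this
  rw [real_inner_self_eq_norm_sq]
  linarith

lemma anti (Φ Φ' : ℝ → ℝ) (T : ℝ) (hT : 0 < T) (hΦ : ∀ t > 0, HasDerivAt Φ (Φ' t) t)
    (h : ∀ t, T ≤ t → Φ' t ≤ 0) : ∀ t, T ≤ t → Φ t ≤ Φ T := by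
  have hanti : AntitoneOn Φ (Ici T) := by
    apply antitoneOn_of_hasDerivWithinAt_nonpos (convex_Ici T) (f' := Φ')
    · intro t ht
      exact (hΦ t (by linarith [mem_Ici.1 ht])).continuousAt.continuousWithinAt
    · intro t ht
      rw [interior_Ici] at ht
      exact (hΦ t (by linarith [mem_Ioi.1 ht])).hasDerivWithinAt
    · intro t ht
      rw [interior_Ici] at ht
      exact h t (le_of_lt ht)
  exact fun t ht => hanti (mem_Ici.2 le_rfl) (mem_Ici.2 ht) ht

lemma waveW1 (B : H →L[ℝ] H) (hB : ∀ x y, ⟪B x, y⟫_ℝ = ⟪x, B y⟫_ℝ) (c : ℝ) (hc : 0 < c)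
    (hBc : ∀ x, c * ‖x‖ ^ 2 ≤ ⟪B x, x⟫_ℝ)
    (G : H → H → Prop) (hG : ∀ x a y b, G x a → G y b → ⟪a, y⟫_ℝ = ⟪x, b⟫_ℝ)
    (hG0 : ∀ x a, G x a → 0 ≤ ⟪a, x⟫_ℝ)
    (u du ddu a : ℝ → H)
    (hu : ∀ t > 0, HasDerivAt u (du t) t) (hdu : ∀ t > 0, HasDerivAt du (ddu t) t)
    (ha : ∀ t > 0, ContinuousAt a t) (hua : ∀ t > 0, G (u t) (a t))
    (heq : ∀ t > 0, ddu t + a t + B (du t) = 0)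
    (N : ℝ → ℝ) (hN : ∀ t > 0, HasDerivAt N (t * ‖du t‖ ^ 2) t) :
    ∃ C, ∀ t ≥ 1, c / 4 * ‖u t‖ ^ 2 + 2 * c * N t ≤ C := by
  have dE := waveE B G hG u du ddu a hu hdu ha hua heq
  have dX := waveX B hB u du ddu a hu hdu heq
  have key := anti (fun s => (‖du s‖ ^ 2 + ⟪a s, u s⟫_ℝ) / c +
      (2 * ⟪du s, u s⟫_ℝ + ⟪B (u s), u s⟫_ℝ) / 2 + s * (‖du s‖ ^ 2 + ⟪a s, u s⟫_ℝ) + 2 * c * N s)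
    (fun t => (-2 * ⟪B (du t), du t⟫_ℝ) / c + (2 * ‖du t‖ ^ 2 - 2 * ⟪a t, u t⟫_ℝ) / 2 +
      (1 * (‖du t‖ ^ 2 + ⟪a t, u t⟫_ℝ) + t * (-2 * ⟪B (du t), du t⟫_ℝ)) + 2 * c * (t * ‖du t‖ ^ 2))
    1 one_pos (fun t ht => ((((dE t ht).div_const c).add ((dX t ht).div_const 2)).add
      ((hasDerivAt_id t).mul (dE t ht))).add ((hN t ht).const_mul (2 * c))) ?_
  · refine ⟨_, fun t ht => le_trans ?_ (key t ht)⟩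
    have ht0 : 0 < t := by linarith
    have h1 := hG0 _ _ (hua t ht0)
    have h2 := (abs_le.1 (cs (du t) (u t))).1
    have h3 := hBc (u t)
    have h4 : 0 ≤ t * (‖du t‖ ^ 2 + ⟪a t, u t⟫_ℝ) := by positivity
    have h5 : 0 ≤ ⟪a t, u t⟫_ℝ / c := by positivity
    have h6 : 0 ≤ (‖du t‖ - c / 2 * ‖u t‖) ^ 2 / c := by positivity
    have e : (‖du t‖ - c / 2 * ‖u t‖) ^ 2 / c =
      ‖du t‖ ^ 2 / c - ‖du t‖ * ‖u t‖ + c / 4 * ‖u t‖ ^ 2 := by field_simp; ring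
    rw [add_div]
    linarith
  · intro t ht
    have h1 := hBc (du t)
    have h2 : 2 * ‖du t‖ ^ 2 ≤ 2 * ⟪B (du t), du t⟫_ℝ / c := by
      rw [le_div_iff₀ hc]; linarith
    have h3 : t * (c * ‖du t‖ ^ 2) ≤ t * ⟪B (du t), du t⟫_ℝ := by gcongr
    have e : (-2 * ⟪B (du t), du t⟫_ℝ) / c = -(2 * ⟪B (du t), du t⟫_ℝ / c) := by ring
    rw [e]
    linarith

lemma waveW2 (B : H →L[ℝ] H) (hB : ∀ x y, ⟪B x, y⟫_ℝ = ⟪x, B y⟫_ℝ) (c : ℝ) (hc : 0 < c)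
    (hBc : ∀ x, c * ‖x‖ ^ 2 ≤ ⟪B x, x⟫_ℝ)
    (G : H → H → Prop) (hG : ∀ x a y b, G x a → G y b → ⟪a, y⟫_ℝ = ⟪x, b⟫_ℝ)
    (hG0 : ∀ x a, G x a → 0 ≤ ⟪a, x⟫_ℝ)
    (u du ddu a : ℝ → H)
    (hu : ∀ t > 0, HasDerivAt u (du t) t) (hdu : ∀ t > 0, HasDerivAt du (ddu t) t)
    (cu : ContinuousOn u (Ici 0)) (cdu : ContinuousOn du (Ici 0)) (ca : ContinuousOn a (Ici 0))
    (hua : ∀ t > 0, G (u t) (a t))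
    (heq : ∀ t > 0, ddu t + a t + B (du t) = 0) (T : ℝ) (hT : 3 / (2 * c) ≤ T) :
    ∫ s in (0:ℝ)..T, ((2 * c * s ^ 3 - 6 * s ^ 2) * ‖du s‖ ^ 2
      - 3 * s * (2 * ⟪du s, u s⟫_ℝ + ⟪B (u s), u s⟫_ℝ)) ≤ 0 := by
  have hT0 : 0 < T := lt_of_lt_of_le (by positivity) hT
  have ha : ∀ t > 0, ContinuousAt a t := fun t ht => ca.continuousAt (Ici_mem_nhds ht)
  have dE := waveE B G hG u du ddu a hu hdu ha hua heq
  have dX := waveX B hB u du ddu a hu hdu heq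
  have cX : ContinuousOn (fun s => 2 * ⟪du s, u s⟫_ℝ + ⟪B (u s), u s⟫_ℝ) (Icc 0 T) := by
    have cu := cu.mono (fun x hx => hx.1 : Icc 0 T ⊆ Ici 0)
    have cdu := cdu.mono (fun x hx => hx.1 : Icc 0 T ⊆ Ici 0)
    have : ContinuousOn (fun s => B (u s)) (Icc 0 T) := B.continuous.comp_continuousOn cu
    exact ((cdu.inner cu).const_mul 2).add (this.inner cu)
  have cE : ContinuousOn (fun s => ‖du s‖ ^ 2 + ⟪a s, u s⟫_ℝ) (Icc 0 T) := by
    have cu := cu.mono (fun x hx => hx.1 : Icc 0 T ⊆ Ici 0)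
    have ca := ca.mono (fun x hx => hx.1 : Icc 0 T ⊆ Ici 0)
    have cdu := cdu.mono (fun x hx => hx.1 : Icc 0 T ⊆ Ici 0)
    exact (cdu.norm.pow 2).add (ca.inner cu)
  have cdu' := cdu.mono (fun x hx => hx.1 : Icc 0 T ⊆ Ici 0)
  have key := intervalIntegral.sub_le_integral_of_hasDeriv_right_of_le hT0.le
    (g := fun s => s ^ 3 * (‖du s‖ ^ 2 + ⟪a s, u s⟫_ℝ) +
      3 / 2 * (s ^ 2 * (2 * ⟪du s, u s⟫_ℝ + ⟪B (u s), u s⟫_ℝ)))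
    (g' := fun t => (3 * t ^ 2 * (‖du t‖ ^ 2 + ⟪a t, u t⟫_ℝ) + t ^ 3 * (-2 * ⟪B (du t), du t⟫_ℝ)) +
      3 / 2 * (2 * t * (2 * ⟪du t, u t⟫_ℝ + ⟪B (u t), u t⟫_ℝ) +
        t ^ 2 * (2 * ‖du t‖ ^ 2 - 2 * ⟪a t, u t⟫_ℝ)))
    (φ := fun s => -((2 * c * s ^ 3 - 6 * s ^ 2) * ‖du s‖ ^ 2
      - 3 * s * (2 * ⟪du s, u s⟫_ℝ + ⟪B (u s), u s⟫_ℝ))) ?_ ?_ ?_ ?_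
  · rw [intervalIntegral.integral_neg] at key
    have h1 := hG0 _ _ (hua T hT0)
    have h2 := (abs_le.1 (cs (du T) (u T))).1
    have h3 := hBc (u T)
    have h4 : 0 ≤ T ^ 3 * ⟪a T, u T⟫_ℝ := by positivity
    have h5 : -(‖du T‖ ^ 2 / c) ≤ 2 * ⟪du T, u T⟫_ℝ + ⟪B (u T), u T⟫_ℝ := by
      have h6 : 0 ≤ (‖du T‖ - c * ‖u T‖) ^ 2 / c := by positivity
      have e : (‖du T‖ - c * ‖u T‖) ^ 2 / c =
        ‖du T‖ ^ 2 / c - 2 * (‖du T‖ * ‖u T‖) + c * ‖u T‖ ^ 2 := by field_simp; ring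
      linarith
    have h6 : T ^ 2 * (-(‖du T‖ ^ 2 / c)) ≤ T ^ 2 * (2 * ⟪du T, u T⟫_ℝ + ⟪B (u T), u T⟫_ℝ) := by gcongr
    have h7 : T ^ 2 * ‖du T‖ ^ 2 * (3 / (2 * c)) ≤ T ^ 2 * ‖du T‖ ^ 2 * T := by gcongr
    have e2 : T ^ 2 * ‖du T‖ ^ 2 * (3 / (2 * c)) = 3 / 2 * (T ^ 2 * (‖du T‖ ^ 2 / c)) := by
      field_simp
    simp only [ne_eq, OfNat.ofNat_ne_zero, not_false_eq_true, zero_pow, zero_mul, mul_zero,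
      add_zero, sub_zero] at key
    nlinarith
  · exact ((continuousOn_id.pow 3).mul cE).add
      (((continuousOn_id.pow 2).mul cX).const_mul (3/2))
  · intro t ht
    have h2 : HasDerivAt (fun t : ℝ => t ^ 2) (2 * t) t := by simpa using hasDerivAt_pow 2 t
    have h3 : HasDerivAt (fun t : ℝ => t ^ 3) (3 * t ^ 2) t := by simpa using hasDerivAt_pow 3 t
    exact ((h3.mul (dE t ht.1)).add ((h2.mul (dX t ht.1)).const_mul (3/2))).hasDerivWithinAt
  · apply ContinuousOn.integrableOn_Icc
    refine ContinuousOn.neg (ContinuousOn.sub (ContinuousOn.mul ?_ (cdu'.norm.pow 2))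
      (ContinuousOn.mul ?_ cX)) <;> fun_prop
  · intro t ht
    have h1 := hBc (du t)
    have ht0 := ht.1
    have h3 : t ^ 3 * (c * ‖du t‖ ^ 2) ≤ t ^ 3 * ⟪B (du t), du t⟫_ℝ := by gcongr
    linarith

lemma waveW3 (B : H →L[ℝ] H) (hB : ∀ x y, ⟪B x, y⟫_ℝ = ⟪x, B y⟫_ℝ) (c : ℝ) (hc : 0 < c)
    (hBc : ∀ x, c * ‖x‖ ^ 2 ≤ ⟪B x, x⟫_ℝ)
    (G : H → H → Prop) (hG : ∀ x a y b, G x a → G y b → ⟪a, y⟫_ℝ = ⟪x, b⟫_ℝ)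
    (hG0 : ∀ x a, G x a → 0 ≤ ⟪a, x⟫_ℝ)
    (hGsub : ∀ x a y b, G x a → G y b → G (x - y) (a - b))
    (hGsmul : ∀ (r : ℝ) x a, G x a → G (r • x) (r • a))
    (u du ddu a : ℝ → H)
    (hu : ∀ t > 0, HasDerivAt u (du t) t) (hdu : ∀ t > 0, HasDerivAt du (ddu t) t)
    (cu : ContinuousOn u (Ici 0)) (cdu : ContinuousOn du (Ici 0)) (ca : ContinuousOn a (Ici 0))
    (cddu : ContinuousOn ddu (Ici 0))
    (hua : ∀ t > 0, G (u t) (a t))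
    (heq : ∀ t > 0, ddu t + a t + B (du t) = 0) (T : ℝ) (hT : 3 / (2 * c) ≤ T) :
    ∫ s in (0:ℝ)..T, ((2 * c * s ^ 3 - 6 * s ^ 2) * ‖ddu s‖ ^ 2
      - 3 * s * (2 * ⟪ddu s, du s⟫_ℝ + ⟪B (du s), du s⟫_ℝ)) ≤ 0 := by
  have hT0 : 0 < T := lt_of_lt_of_le (by positivity) hT
  -- difference quotients
  let q : (ℝ → H) → ℝ → ℝ → H := fun f h t => h⁻¹ • (f (t + h) - f t)
  have qd : ∀ (f df : ℝ → H), (∀ t > 0, HasDerivAt f (df t) t) → ∀ h > 0, ∀ t > 0,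
      HasDerivAt (q f h) (q df h t) t := by
    intro f df hf h hh t ht
    exact (((hf (t + h) (by linarith)).comp_add_const t h).sub (hf t ht)).const_smul h⁻¹
  have qc : ∀ (f : ℝ → H), ContinuousOn f (Ici 0) → ∀ h > 0, ContinuousOn (q f h) (Ici 0) := by
    intro f hf h hh
    refine ContinuousOn.const_smul (ContinuousOn.sub ?_ hf) h⁻¹
    refine hf.comp (by fun_prop) ?_
    intro t ht
    simp only [mem_Ici] at *
    linarith
  have hbd : ∀ (f : ℝ → H), ContinuousOn f (Ici 0) → ∃ M, 0 ≤ M ∧ ∀ t ∈ Icc 0 (T + 1), ‖f t‖ ≤ M := by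
    intro f hf
    obtain ⟨M, hM⟩ := isCompact_Icc.exists_bound_of_continuousOn
      (hf.mono (fun x hx => hx.1 : Icc 0 (T+1) ⊆ Ici 0))
    exact ⟨M, (norm_nonneg _).trans (hM 0 ⟨le_rfl, by linarith⟩), hM⟩
  have qb : ∀ (f df : ℝ → H), (∀ t > 0, HasDerivAt f (df t) t) → ∀ M,
      (∀ t ∈ Icc 0 (T + 1), ‖df t‖ ≤ M) → ∀ h ∈ Ioo (0:ℝ) 1, ∀ t ∈ Ioc 0 T, ‖q f h t‖ ≤ M := by
    intro f df hf M hM h hh t ht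
    have := (convex_Ioo (0:ℝ) (T + 1)).norm_image_sub_le_of_norm_hasDerivWithin_le (f := f) (f' := df)
      (C := M) (fun x hx => (hf x hx.1).hasDerivWithinAt) (fun x hx => hM x ⟨hx.1.le, hx.2.le⟩)
      (x := t) (y := t + h) ⟨ht.1, by linarith [ht.2]⟩ ⟨by linarith [ht.1, hh.1], by linarith [ht.2, hh.2]⟩
    simp only [q, norm_smul, norm_inv, Real.norm_eq_abs, abs_of_pos hh.1, add_sub_cancel_left] at this ⊢
    rw [inv_mul_le_iff₀ hh.1]
    linarith
  have ql : ∀ (f df : ℝ → H), (∀ t > 0, HasDerivAt f (df t) t) → ∀ t > 0,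
      Tendsto (fun h => q f h t) (𝓝[>] 0) (𝓝 (df t)) := by
    intro f df hf t ht
    have := hasDerivAt_iff_tendsto_slope_zero.1 (hf t ht)
    exact this.mono_left (nhdsWithin_mono _ (fun x hx => ne_of_gt hx))
  obtain ⟨M1, hM10, hM1⟩ := hbd du cdu
  obtain ⟨M2, hM20, hM2⟩ := hbd ddu cddu
  have hle : ∀ h > 0, ∫ s in (0:ℝ)..T, ((2 * c * s ^ 3 - 6 * s ^ 2) * ‖q du h s‖ ^ 2
      - 3 * s * (2 * ⟪q du h s, q u h s⟫_ℝ + ⟪B (q u h s), q u h s⟫_ℝ)) ≤ 0 := by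
    intro h hh
    refine waveW2 B hB c hc hBc G hG hG0 (q u h) (q du h) (q ddu h) (q a h) (qd _ _ hu h hh)
      (qd _ _ hdu h hh) (qc _ cu h hh) (qc _ cdu h hh) (qc _ ca h hh) ?_ ?_ T hT
    · intro t ht
      exact hGsmul _ _ _ (hGsub _ _ _ _ (hua (t + h) (by linarith)) (hua t ht))
    · intro t ht
      have h1 := heq (t + h) (by linarith)
      have h2 := heq t ht
      simp only [q, map_smul, map_sub]
      rw [← smul_add, ← smul_add]
      have : ddu (t + h) - ddu t + (a (t + h) - a t) + (B (du (t + h)) - B (du t)) =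
        (ddu (t + h) + a (t + h) + B (du (t + h))) - (ddu t + a t + B (du t)) := by abel
      rw [this, h1, h2, sub_zero, smul_zero]
  have hlim : Tendsto (fun h => ∫ s in (0:ℝ)..T, ((2 * c * s ^ 3 - 6 * s ^ 2) * ‖q du h s‖ ^ 2
      - 3 * s * (2 * ⟪q du h s, q u h s⟫_ℝ + ⟪B (q u h s), q u h s⟫_ℝ))) (𝓝[>] 0)
      (𝓝 (∫ s in (0:ℝ)..T, ((2 * c * s ^ 3 - 6 * s ^ 2) * ‖ddu s‖ ^ 2
      - 3 * s * (2 * ⟪ddu s, du s⟫_ℝ + ⟪B (du s), du s⟫_ℝ)))) := by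
    apply intervalIntegral.tendsto_integral_filter_of_dominated_convergence
      (fun _ => (2 * c * T ^ 3 + 6 * T ^ 2) * M2 ^ 2 + 3 * T * (2 * (M2 * M1) + ‖B‖ * M1 * M1))
    · filter_upwards [self_mem_nhdsWithin] with h hh
      have hh : 0 < h := hh
      have c1 := (qc _ cu h hh).mono (fun x hx => hx.1.le : Ioc 0 T ⊆ Ici 0)
      have c2 := (qc _ cdu h hh).mono (fun x hx => hx.1.le : Ioc 0 T ⊆ Ici 0)
      rw [uIoc_of_le hT0.le]
      refine ContinuousOn.aestronglyMeasurable ?_ measurableSet_Ioc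
      have c3 : ContinuousOn (fun s => B (q u h s)) (Ioc 0 T) := B.continuous.comp_continuousOn c1
      refine ContinuousOn.sub (ContinuousOn.mul (by fun_prop) (c2.norm.pow 2))
        (ContinuousOn.mul (by fun_prop) (((c2.inner c1).const_mul 2).add (c3.inner c1)))
    · filter_upwards [Ioo_mem_nhdsGT (show (0:ℝ) < 1 by norm_num)] with h hh
      refine Eventually.of_forall fun s hs => ?_
      rw [uIoc_of_le hT0.le] at hs
      have b1 := qb u du hu M1 hM1 h hh s hs
      have b2 := qb du ddu hdu M2 hM2 h hh s hs
      have hs0 := hs.1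
      have hsT := hs.2
      rw [Real.norm_eq_abs]
      refine (abs_sub _ _).trans ?_
      rw [abs_mul, abs_mul, abs_of_nonneg (sq_nonneg ‖q du h s‖), abs_of_pos (by positivity : 0 < 3 * s)]
      have k1 : |2 * c * s ^ 3 - 6 * s ^ 2| ≤ 2 * c * T ^ 3 + 6 * T ^ 2 := by
        refine (abs_sub _ _).trans ?_
        rw [abs_of_pos (by positivity), abs_of_pos (by positivity)]
        gcongr
      have k2 : |2 * ⟪q du h s, q u h s⟫_ℝ + ⟪B (q u h s), q u h s⟫_ℝ| ≤
          2 * (M2 * M1) + ‖B‖ * M1 * M1 := by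
        refine (abs_add_le _ _).trans ?_
        rw [abs_mul, abs_two]
        have := cs (q du h s) (q u h s)
        have h2 := cs (B (q u h s)) (q u h s)
        have h3 := B.le_opNorm (q u h s)
        have h4 : ‖q du h s‖ * ‖q u h s‖ ≤ M2 * M1 := by gcongr
        have h5 : ‖B (q u h s)‖ * ‖q u h s‖ ≤ (‖B‖ * M1) * M1 := by
          gcongr
          exact h3.trans (by gcongr)
        linarith
      gcongr
    · exact intervalIntegrable_const
    · refine Eventually.of_forall fun s hs => ?_
      rw [uIoc_of_le hT0.le] at hs
      have l1 := ql u du hu s hs.1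
      have l2 := ql du ddu hdu s hs.1
      have l3 := (B.continuous.tendsto _).comp l1
      exact ((l2.norm.pow 2).const_mul _).sub ((((l2.inner l1).const_mul 2).add (l3.inner l1)).const_mul _)
  refine le_of_tendsto hlim ?_
  filter_upwards [self_mem_nhdsWithin] with h hh using hle h hh

lemma cmax {E : Type*} [TopologicalSpace E] (φ : ℝ → E) (hφ : ContinuousOn φ (Ici 0)) :
    Continuous (fun s => φ (max s 0)) := by
  refine hφ.comp_continuous (by fun_prop) (fun s => ?_)
  simp

lemma prim {E : Type*} [NormedAddCommGroup E] [NormedSpace ℝ E] [CompleteSpace E]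
    (φ : ℝ → E) (hφ : ContinuousOn φ (Ici 0)) :
    ∀ t > 0, HasDerivAt (fun t => ∫ s in (0:ℝ)..t, φ (max s 0)) (φ t) t := by
  intro t ht
  have := ((cmax φ hφ).integral_hasStrictDerivAt 0 t).hasDerivAt
  rwa [max_eq_left ht.le] at this

lemma tend_of_bdd (J j : ℝ → ℝ) (hJ : ∀ t > 0, HasDerivAt J (j t) t) (hj : ∀ t > 0, 0 ≤ j t)
    (C T : ℝ) (hC : ∀ t ≥ T, J t ≤ C) : ∃ L, Tendsto J atTop (𝓝 L) := by
  set S := max T 1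
  have hS : 0 < S := lt_of_lt_of_le one_pos (le_max_right _ _)
  have hm : MonotoneOn J (Ici S) := by
    apply monotoneOn_of_hasDerivWithinAt_nonneg (convex_Ici S) (f' := j)
    · intro t ht
      exact (hJ t (by linarith [mem_Ici.1 ht])).continuousAt.continuousWithinAt
    · intro t ht
      rw [interior_Ici] at ht
      exact (hJ t (by linarith [mem_Ioi.1 ht])).hasDerivWithinAt
    · intro t ht
      rw [interior_Ici] at ht
      exact hj t (by linarith [mem_Ioi.1 ht])
  have hm2 : Monotone (fun t => J (max t S)) := by
    intro s t hst
    exact hm (mem_Ici.2 (le_max_right _ _)) (mem_Ici.2 (le_max_right _ _)) (max_le_max_right _ hst)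
  have hb : BddAbove (range (fun t => J (max t S))) := by
    refine ⟨C, ?_⟩
    rintro _ ⟨t, rfl⟩
    exact hC _ ((le_max_left T 1).trans (le_max_right _ _))
  refine ⟨_, (tendsto_atTop_ciSup hm2 hb).congr' ?_⟩
  filter_upwards [eventually_ge_atTop S] with t ht
  simp [max_eq_left ht]

lemma wave_main (B : H →L[ℝ] H) (hB : ∀ x y, ⟪B x, y⟫_ℝ = ⟪x, B y⟫_ℝ) (c : ℝ) (hc : 0 < c)
    (hBc : ∀ x, c * ‖x‖ ^ 2 ≤ ⟪B x, x⟫_ℝ)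
    (G : H → H → Prop) (hG : ∀ x a y b, G x a → G y b → ⟪a, y⟫_ℝ = ⟪x, b⟫_ℝ)
    (hG0 : ∀ x a, G x a → 0 ≤ ⟪a, x⟫_ℝ)
    (hGsub : ∀ x a y b, G x a → G y b → G (x - y) (a - b))
    (hGsmul : ∀ (r : ℝ) x a, G x a → G (r • x) (r • a))
    (u du ddu a : ℝ → H)
    (hu : ∀ t > 0, HasDerivAt u (du t) t) (hdu : ∀ t > 0, HasDerivAt du (ddu t) t)
    (cu : ContinuousOn u (Ici 0)) (cdu : ContinuousOn du (Ici 0)) (ca : ContinuousOn a (Ici 0))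
    (cddu : ContinuousOn ddu (Ici 0))
    (hua : ∀ t > 0, G (u t) (a t))
    (heq : ∀ t > 0, ddu t + a t + B (du t) = 0) :
    (∃ C > 0, ∀ t ≥ 1, ‖u t‖ ≤ C) ∧ (∀ ε > 0, ∀ᶠ t in atTop, t * ‖du t‖ ≤ ε) ∧
    ∃ (J : ℝ → ℝ) (L : ℝ), (∀ t > 0, HasDerivAt J (t ^ 3 * ‖ddu t‖ ^ 2) t) ∧
      Tendsto J atTop (𝓝 L) := by
  have ha : ∀ t > 0, ContinuousAt a t := fun t ht => ca.continuousAt (Ici_mem_nhds ht)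
  let N : ℝ → ℝ := fun t => ∫ s in (0:ℝ)..t, (fun s => s * ‖du s‖ ^ 2) (max s 0)
  have hN : ∀ t > 0, HasDerivAt N (t * ‖du t‖ ^ 2) t :=
    prim (fun s => s * ‖du s‖ ^ 2) (continuousOn_id.mul (cdu.norm.pow 2))
  let J : ℝ → ℝ := fun t => ∫ s in (0:ℝ)..t, (fun s => s ^ 3 * ‖ddu s‖ ^ 2) (max s 0)
  have hJ : ∀ t > 0, HasDerivAt J (t ^ 3 * ‖ddu t‖ ^ 2) t :=
    prim (fun s => s ^ 3 * ‖ddu s‖ ^ 2) ((continuousOn_id.pow 3).mul (cddu.norm.pow 2))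
  let F : ℝ → ℝ := fun s => ((2 * c * s ^ 3 - 6 * s ^ 2) * ‖ddu s‖ ^ 2
      - 3 * s * (2 * ⟪ddu s, du s⟫_ℝ + ⟪B (du s), du s⟫_ℝ))
  have cF : ContinuousOn F (Ici 0) := by
    have c3 : ContinuousOn (fun s => B (du s)) (Ici 0) := B.continuous.comp_continuousOn cdu
    refine ContinuousOn.sub (ContinuousOn.mul (by fun_prop) (cddu.norm.pow 2))
      (ContinuousOn.mul (by fun_prop) (((cddu.inner cdu).const_mul 2).add (c3.inner cdu)))
  let I : ℝ → ℝ := fun t => ∫ s in (0:ℝ)..t, F (max s 0)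
  have hI : ∀ t > 0, HasDerivAt I (F t) t := prim F cF
  have hI0 : ∀ T ≥ 3 / (2 * c), I T ≤ 0 := by
    intro T hT
    have hT0 : 0 < T := lt_of_lt_of_le (by positivity) hT
    have := waveW3 B hB c hc hBc G hG hG0 hGsub hGsmul u du ddu a hu hdu cu cdu ca cddu hua heq T hT
    refine le_trans (le_of_eq ?_) this
    apply intervalIntegral.integral_congr
    intro s hs
    rw [uIcc_of_le hT0.le] at hs
    simp only [F, max_eq_left hs.1]
  obtain ⟨C1, hC1⟩ := waveW1 B hB c hc hBc G hG hG0 u du ddu a hu hdu ha hua heq N hN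
  have hN0 : ∀ t ≥ 1, 0 ≤ N t := by
    intro t ht
    apply intervalIntegral.integral_nonneg (by linarith)
    intro s hs
    positivity
  have hu2 : ∀ t ≥ 1, c / 4 * ‖u t‖ ^ 2 ≤ C1 := by
    intro t ht
    have := hC1 t ht
    have h2 := hN0 t ht
    have : 0 ≤ 2 * c * N t := by positivity
    linarith
  have hNb : ∀ t ≥ 1, 2 * c * N t ≤ C1 := by
    intro t ht
    have := hC1 t ht
    have : 0 ≤ c / 4 * ‖u t‖ ^ 2 := by positivity
    linarith
  obtain ⟨LN, hLN⟩ := tend_of_bdd N _ hN (fun t ht => by positivity) (C1 / (2 * c)) 1 (by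
    intro t ht
    rw [le_div_iff₀ (by positivity)]
    linarith [hNb t ht])
  let S := max 1 (9 / c + 3 / (2 * c))
  have hS1 : 1 ≤ S := le_max_left _ _
  have hSp : 0 < S := by linarith
  have hSc : 9 / c + 3 / (2 * c) ≤ S := le_max_right _ _
  have p1 : 0 < 9 / c := by positivity
  have p2 : 0 < 3 / (2 * c) := by positivity
  have key := anti (fun t => c * J t - I t - 3 * (1 + ‖B‖) * N t)
    (fun t => c * (t ^ 3 * ‖ddu t‖ ^ 2) - F t - 3 * (1 + ‖B‖) * (t * ‖du t‖ ^ 2)) S hSp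
    (fun t ht => (((hJ t ht).const_mul c).sub (hI t ht)).sub ((hN t ht).const_mul _)) (by
      intro t ht
      have ht1 : 1 ≤ t := hS1.trans ht
      have ht0 : 0 < t := by linarith
      have htc : 9 ≤ c * t := by
        have : 9 / c ≤ t := by linarith
        rw [div_le_iff₀ hc] at this; linarith
      have h1 := (abs_le.1 (cs (ddu t) (du t))).2
      have h2 := (abs_le.1 (cs (B (du t)) (du t))).2
      have h3 : ‖B (du t)‖ * ‖du t‖ ≤ ‖B‖ * ‖du t‖ * ‖du t‖ := by
        gcongr; exact B.le_opNorm _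
      have h4 : 2 * ⟪ddu t, du t⟫_ℝ + ⟪B (du t), du t⟫_ℝ ≤ ‖ddu t‖ ^ 2 + (1 + ‖B‖) * ‖du t‖ ^ 2 := by
        nlinarith [sq_nonneg (‖ddu t‖ - ‖du t‖)]
      have h5 : 3 * t * (2 * ⟪ddu t, du t⟫_ℝ + ⟪B (du t), du t⟫_ℝ) ≤
        3 * t * (‖ddu t‖ ^ 2 + (1 + ‖B‖) * ‖du t‖ ^ 2) := by gcongr
      have h6 : 6 * t ^ 2 + 3 * t ≤ c * t ^ 3 := by nlinarith [sq_nonneg t]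
      have h7 : (6 * t ^ 2 + 3 * t) * ‖ddu t‖ ^ 2 ≤ c * t ^ 3 * ‖ddu t‖ ^ 2 := by gcongr
      simp only [F]
      linarith)
  obtain ⟨LJ, hLJ⟩ := tend_of_bdd J _ hJ (fun t ht => by positivity)
    (((c * J S - I S - 3 * (1 + ‖B‖) * N S) + 3 * (1 + ‖B‖) * (C1 / (2 * c))) / c) S (by
    intro t ht
    rw [le_div_iff₀ hc]
    have h1 := key t ht
    have h2 := hI0 t (by linarith)
    have h3 : N t ≤ C1 / (2 * c) := by
      rw [le_div_iff₀ (by positivity)]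
      linarith [hNb t (hS1.trans ht)]
    have h4 : 3 * (1 + ‖B‖) * N t ≤ 3 * (1 + ‖B‖) * (C1 / (2 * c)) := by gcongr
    linarith)
  refine ⟨?_, ?_, J, LJ, hJ, hLJ⟩
  · refine ⟨Real.sqrt (4 * C1 / c) + 1, by positivity, fun t ht => ?_⟩
    have : ‖u t‖ ≤ Real.sqrt (4 * C1 / c) := by
      apply Real.le_sqrt_of_sq_le
      rw [le_div_iff₀ hc]
      linarith [hu2 t ht]
    linarith
  · intro ε hε
    have := cmp (fun t => t ^ 4 * ‖du t‖ ^ 2)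
      (fun t => 4 * t ^ 3 * ‖du t‖ ^ 2 + t ^ 4 * (2 * ⟪du t, ddu t⟫_ℝ))
      (fun t => 5 * N t + J t) (fun t => 5 * (t * ‖du t‖ ^ 2) + t ^ 3 * ‖ddu t‖ ^ 2) ?_
      (fun t ht => ((hN t ht).const_mul 5).add (hJ t ht)) (5 * LN + LJ)
      ((hLN.const_mul 5).add hLJ) (ε ^ 2) (by positivity) ?_
    · filter_upwards [this, eventually_gt_atTop 0] with t h1 ht
      have h2 : t ^ 2 * (t * ‖du t‖) ^ 2 ≤ t ^ 2 * ε ^ 2 := by linarith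
      have h3 := le_of_mul_le_mul_left h2 (by positivity)
      exact (pow_le_pow_iff_left₀ (by positivity) (by positivity) two_ne_zero).1 h3
    · intro t ht
      have h4 : HasDerivAt (fun t : ℝ => t ^ 4) (4 * t ^ 3) t := by simpa using hasDerivAt_pow 4 t
      exact h4.mul (hdu t ht).norm_sq
    · filter_upwards [eventually_gt_atTop 0] with t ht
      have h1 := (abs_le.1 (cs (du t) (ddu t))).2
      have h2 : 2 * t ^ 4 * ⟪du t, ddu t⟫_ℝ ≤ 2 * t ^ 4 * (‖du t‖ * ‖ddu t‖) := by gcongr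
      have h3 : 0 ≤ t ^ 3 * (‖du t‖ - t * ‖ddu t‖) ^ 2 := by positivity
      have h4 : 0 ≤ ε ^ 2 * t := by positivity
      linarith
end

section
variable {H : Type*} [NormedAddCommGroup H] [InnerProductSpace ℝ H] [CompleteSpace H]

lemma integ (G : H → H → Prop)
    (hGint : ∀ f a : ℝ → H, Continuous f → Continuous a → (∀ s ≥ 0, G (f s) (a s)) →
      ∀ t ≥ 0, G (∫ s in (0:ℝ)..t, f s) (∫ s in (0:ℝ)..t, a s))
    (y b P : ℝ → H) (cy : ContinuousOn y (Ici 0)) (cb : ContinuousOn b (Ici 0))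
    (cP : ContinuousOn P (Ici 0)) (hyb : ∀ t ≥ 0, G (y t) (b t))
    (hP : ∀ t > 0, HasDerivAt P (-b t) t) :
    ∃ Y : ℝ → H, (∀ t > 0, HasDerivAt Y (y t) t) ∧ Y 0 = 0 ∧ ContinuousOn Y (Ici 0) ∧
      ∀ t ≥ 0, G (Y t) (P 0 - P t) := by
  refine ⟨fun t => ∫ s in (0:ℝ)..t, y (max s 0), prim y cy, by simp, ?_, ?_⟩
  · intro t _
    exact ((cmax y cy).integral_hasStrictDerivAt 0 t).hasDerivAt.continuousAt.continuousWithinAt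
  · intro t ht
    have h1 := hGint _ _ (cmax y cy) (cmax b cb) (fun s hs => hyb _ (le_max_right _ _)) t ht
    have h2 : ∫ s in (0:ℝ)..t, b (max s 0) = P 0 - P t := by
      have := intervalIntegral.integral_eq_sub_of_hasDerivAt_of_le ht (f := fun s => -P s)
        (f' := fun s => b (max s 0))
        ((cP.mono (fun x hx => hx.1 : Icc 0 t ⊆ Ici 0)).neg) (by
          intro s hs
          rw [max_eq_left hs.1.le]
          exact (hP s hs.1).neg.congr_deriv (neg_neg _)) ((cmax b cb).intervalIntegrable _ _)
      rw [this]; abel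
    rwa [h2] at h1

theorem abstract_main (B : H →L[ℝ] H) (hB : ∀ x y, ⟪B x, y⟫_ℝ = ⟪x, B y⟫_ℝ) (c : ℝ) (hc : 0 < c)
    (hBc : ∀ x, c * ‖x‖ ^ 2 ≤ ⟪B x, x⟫_ℝ)
    (G : H → H → Prop) (hG : ∀ x a y b, G x a → G y b → ⟪a, y⟫_ℝ = ⟪x, b⟫_ℝ)
    (hG0 : ∀ x a, G x a → 0 ≤ ⟪a, x⟫_ℝ)
    (hGsub : ∀ x a y b, G x a → G y b → G (x - y) (a - b))
    (hGsmul : ∀ (r : ℝ) x a, G x a → G (r • x) (r • a))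
    (hGint : ∀ f a : ℝ → H, Continuous f → Continuous a → (∀ s ≥ 0, G (f s) (a s)) →
      ∀ t ≥ 0, G (∫ s in (0:ℝ)..t, f s) (∫ s in (0:ℝ)..t, a s))
    (hGd : ∀ (w : H) (ε : ℝ), 0 < ε → ∃ x a, G x a ∧ ‖w - a‖ < ε)
    (u du ddu a : ℝ → H)
    (hu : ∀ t > 0, HasDerivAt u (du t) t) (hdu : ∀ t > 0, HasDerivAt du (ddu t) t)
    (cu : ContinuousOn u (Ici 0)) (cdu : ContinuousOn du (Ici 0)) (ca : ContinuousOn a (Ici 0))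
    (cddu : ContinuousOn ddu (Ici 0))
    (hua : ∀ t ≥ 0, G (u t) (a t))
    (heq : ∀ t ≥ 0, ddu t + a t + B (du t) = 0)
    (f df : ℝ → H) (hf : ∀ t > 0, HasDerivAt f (df t) t)
    (cf : ContinuousOn f (Ici 0)) (cdf : ContinuousOn df (Ici 0))
    (hfa : ∀ t ≥ 0, G (f t) (-B (df t)))
    (h0 : B (f 0) = B (u 0) + du 0) :
    Tendsto (fun t => t * ‖u t - f t‖) atTop (𝓝 0) := by
  obtain ⟨⟨C, hC, huC⟩, hdu0, J, L, hJ, hL⟩ := wave_main B hB c hc hBc G hG hG0 hGsub hGsmul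
    u du ddu a hu hdu cu cdu ca cddu (fun t ht => hua t ht.le) (fun t ht => heq t ht.le)
  have Bd : ∀ {z : ℝ → H} {z' : H} {t : ℝ}, HasDerivAt z z' t →
    HasDerivAt (fun s => B (z s)) (B z') t := fun hz => B.hasFDerivAt.comp_hasDerivAt _ hz
  have Bc : ∀ {z : ℝ → H}, ContinuousOn z (Ici 0) → ContinuousOn (fun s => B (z s)) (Ici 0) :=
    fun hz => B.continuous.comp_continuousOn hz
  have cat : ∀ {z : ℝ → H}, ContinuousOn z (Ici 0) → ∀ t > 0, ContinuousAt z t :=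
    fun hz t ht => hz.continuousAt (Ici_mem_nhds ht)
  -- the heat solution tends to zero
  have hf0 : ∀ η > 0, ∀ᶠ t in atTop, ‖f t‖ ≤ η := by
    intro η hη
    obtain ⟨F, dF, F0, cF, hF⟩ := integ G hGint f (fun t => -B (df t)) (fun t => B (f t)) cf
      (Bc cdf).neg (Bc cf) hfa (fun t ht => by simpa using Bd (hf t ht))
    set ε := c * η / 4 with hε
    have hεp : 0 < ε := by positivity
    obtain ⟨x, ax, hx, hxε⟩ := hGd (B (f 0)) ε hεp
    have := stepS B hB c hc hBc G hG hG0 (fun t => F t - x) f df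
      (fun t => B (f 0) - B (f t) - ax) (fun t => -B (df t)) (fun _ => B (f 0) - ax) (fun _ => 0)
      (fun t ht => (dF t ht).sub_const x) hf
      (fun t ht => ((continuousAt_const.sub (cat (Bc cf) t ht))).sub continuousAt_const)
      (fun t ht => hGsub _ _ _ _ (hF t ht.le) hx) (fun t ht => hfa t ht.le)
      (fun t ht => by abel) (fun t ht => by simp) ε hεp (Eventually.of_forall fun t => hxε.le)
      (Eventually.of_forall fun t => by simpa using hεp.le)
    filter_upwards [this] with t ht
    have h1 := hBc (f t)
    have h2 : c * ‖f t‖ ^ 2 ≤ c * η ^ 2 := by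
      calc _ ≤ 10 * ε ^ 2 / c := by linarith
        _ = c * (10 / 16 * η ^ 2) := by rw [hε]; field_simp; ring
        _ ≤ c * η ^ 2 := by gcongr; nlinarith [sq_nonneg η]
    exact (pow_le_pow_iff_left₀ (by positivity) (by positivity) two_ne_zero).1
      (le_of_mul_le_mul_left h2 hc)
  -- the error
  have he : ∀ t > 0, HasDerivAt (fun t => u t - f t) (du t - df t) t :=
    fun t ht => (hu t ht).sub (hf t ht)
  have ce : ContinuousOn (fun t => u t - f t) (Ici 0) := cu.sub cf
  have hea : ∀ t ≥ 0, G (u t - f t) (a t - -B (df t)) :=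
    fun t ht => hGsub _ _ _ _ (hua t ht) (hfa t ht)
  obtain ⟨E1, dE1, E10, cE1, hE1⟩ := integ G hGint (fun t => u t - f t)
    (fun t => a t - -B (df t)) (fun t => B (u t - f t) + du t) ce (ca.sub (Bc cdf).neg)
    ((Bc ce).add cdu) hea (fun t ht => by
      refine ((Bd (he t ht)).add (hdu t ht)).congr_deriv ?_
      have := heq t ht.le
      have h2 : ddu t = -(a t + B (du t)) := by
        rw [eq_neg_iff_add_eq_zero, ← this]; abel
      rw [h2, map_sub]; abel)
  have hP0 : B (u 0 - f 0) + du 0 = 0 := by rw [map_sub, h0]; abel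
  simp only [hP0] at hE1
  obtain ⟨E2, dE2, E20, cE2, hE2⟩ := integ G hGint E1
    (fun t => 0 - (B (u t - f t) + du t)) (fun t => B (E1 t) + u t) cE1
    (continuousOn_const.sub ((Bc ce).add cdu))
    ((Bc cE1).add cu) hE1 (fun t ht => by
      refine ((Bd (dE1 t ht)).add (hu t ht)).congr_deriv ?_
      simp)
  have hQ0 : B (E1 0) + u 0 = u 0 := by rw [E10]; simp
  simp only [hQ0] at hE2
  have core : ∀ x ax, G x ax → ∀ ε > 0, (∀ᶠ t in atTop, ‖u 0 - ax - u t‖ ≤ ε) →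
      ∀ᶠ t in atTop, t ^ 2 * ⟪B (u t - f t), u t - f t⟫_ℝ ≤ 5 * (10 * ε ^ 2 / c) * (6 + 4 / c) := by
    intro x ax hx ε hε hg
    have s1 := stepS B hB c hc hBc G hG hG0 (fun t => E2 t - x) E1 (fun t => u t - f t)
      (fun t => u 0 - (B (E1 t) + u t) - ax) (fun t => 0 - (B (u t - f t) + du t))
      (fun t => u 0 - ax - u t) (fun t => -du t)
      (fun t ht => (dE2 t ht).sub_const x) dE1
      (fun t ht => ((continuousAt_const.sub (cat ((Bc cE1).add cu) t ht))).sub continuousAt_const)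
      (fun t ht => hGsub _ _ _ _ (hE2 t ht.le) hx) (fun t ht => hE1 t ht.le)
      (fun t ht => by abel) (fun t ht => by abel) ε hε hg
      (by simpa using hdu0 ε hε)
    set δ := Real.sqrt (10 * ε ^ 2 / c)
    have hδ : 0 < δ := Real.sqrt_pos.2 (by positivity)
    have hδ2 : δ ^ 2 = 10 * ε ^ 2 / c := Real.sq_sqrt (by positivity)
    rw [← hδ2] at s1 ⊢
    exact stepS2 B hB c hc hBc G hG hG0 E1 (fun t => u t - f t) (fun t => du t - df t)
      (fun t => 0 - (B (u t - f t) + du t)) (fun t => a t - -B (df t)) (fun t => -du t)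
      (fun t => -ddu t) dE1 he (fun t ht => cat (continuousOn_const.sub ((Bc ce).add cdu)) t ht)
      (fun t ht => hE1 t ht.le) (fun t ht => hea t ht.le) (fun t ht => by abel)
      (fun t ht => by
        have h2 : ddu t = -(a t + B (du t)) := by
          rw [eq_neg_iff_add_eq_zero, ← heq t ht.le]; abel
        rw [h2, map_sub]; abel)
      δ hδ (by simpa using hdu0 δ hδ) s1 J (by simpa using hJ) L hL
  -- convert
  have core2 : ∀ x ax, G x ax → ∀ ε > 0, (∀ᶠ t in atTop, ‖u 0 - ax - u t‖ ≤ ε) →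
      ∀ᶠ t in atTop, t * ‖u t - f t‖ ≤ ε * Real.sqrt (50 / c * (6 + 4 / c) / c) := by
    intro x ax hx ε hε hg
    filter_upwards [core x ax hx ε hε hg, eventually_gt_atTop 0] with t h1 ht
    have h2 := hBc (u t - f t)
    have h3 : c * (t * ‖u t - f t‖) ^ 2 ≤
        c * (ε * Real.sqrt (50 / c * (6 + 4 / c) / c)) ^ 2 := by
      rw [mul_pow ε, Real.sq_sqrt (by positivity)]
      calc c * (t * ‖u t - f t‖) ^ 2 = t ^ 2 * (c * ‖u t - f t‖ ^ 2) := by ring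
        _ ≤ t ^ 2 * ⟪B (u t - f t), u t - f t⟫_ℝ := by gcongr
        _ ≤ _ := h1
        _ = _ := by field_simp; ring
    exact (pow_le_pow_iff_left₀ (by positivity) (by positivity) two_ne_zero).1
      (le_of_mul_le_mul_left h3 hc)
  set K := Real.sqrt (50 / c * (6 + 4 / c) / c) with hK
  have hKp : 0 < K := Real.sqrt_pos.2 (by positivity)
  obtain ⟨x₀, a₀, hx₀, _⟩ := hGd 0 1 one_pos
  have hG00 : G 0 0 := by simpa using hGsmul 0 _ _ hx₀
  have hu0 : ∀ η > 0, ∀ᶠ t in atTop, ‖u t‖ ≤ η := by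
    intro η hη
    have h1 := core2 0 0 hG00 (‖u 0‖ + C) (by positivity) (by
      filter_upwards [eventually_ge_atTop 1] with t ht
      rw [sub_zero]
      exact (norm_sub_le _ _).trans (by linarith [huC t ht]))
    have h2 : ∀ᶠ t : ℝ in atTop, (‖u 0‖ + C) * K ≤ η / 2 * t :=
      (tendsto_id.const_mul_atTop (by positivity : 0 < η / 2)).eventually_ge_atTop _
    filter_upwards [h1, h2, hf0 (η / 2) (by positivity), eventually_gt_atTop 0] with t h1 h2 h3 ht
    have h4 : t * ‖u t - f t‖ ≤ t * (η / 2) := by linarith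
    have h5 := le_of_mul_le_mul_left h4 ht
    calc ‖u t‖ = ‖(u t - f t) + f t‖ := by simp
      _ ≤ _ := norm_add_le _ _
      _ ≤ η := by linarith
  rw [Metric.tendsto_nhds]
  intro η hη
  set ε := η / (2 * K) with hε
  have hεp : 0 < ε := by positivity
  obtain ⟨x, ax, hx, hxε⟩ := hGd (u 0) (ε / 2) (by positivity)
  have h1 := core2 x ax hx ε hεp (by
    filter_upwards [hu0 (ε / 2) (by positivity)] with t ht
    exact (norm_sub_le _ _).trans (by linarith))
  filter_upwards [h1, eventually_gt_atTop 0] with t h1 ht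
  rw [dist_zero_right, Real.norm_eq_abs, abs_of_nonneg (by positivity)]
  have : ε * K = η / 2 := by rw [hε]; field_simp
  linarith
end

end DW

/-- for each individual solution, `t·‖u(t) − B^{-1/2}v(t)‖ → 0`. -/
theorem stmt6
    {H : Type*} [NormedAddCommGroup H] [InnerProductSpace ℂ H] [CompleteSpace H]
    (A : H →ₗ.[ℂ] H) (hA_sa : IsSelfAdjoint A)
    (hA_pos : ∀ u : A.domain, u ≠ 0 → 0 < (⟪A u, (u : H)⟫).re)
    (B : H →L[ℂ] H) (hB_sa : IsSelfAdjoint B)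
    (c : ℝ) (hc : 0 < c)
    (hB_pos : ∀ u : H, c * ‖u‖ ^ 2 ≤ (⟪B u, u⟫).re)
    -- `Bh` is the positive square root `B^{1/2}` of `B`, `Binvh` its inverse `B^{-1/2}`
    (Bh Binvh : H →L[ℂ] H)
    (hBh_sq : Bh ∘L Bh = B) (hBh_sa : IsSelfAdjoint Bh)
    (hBh_pos : ∀ u : H, 0 ≤ (⟪Bh u, u⟫).re)
    (hBinv₁ : Binvh ∘L Bh = ContinuousLinearMap.id ℂ H)
    (hBinv₂ : Bh ∘L Binvh = ContinuousLinearMap.id ℂ H)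
    -- `B^{±1/2}` map `D(A)` into `D(A)` with the stated bounds
    (hBhD : ∀ u : A.domain, Bh (u : H) ∈ A.domain)
    (hBinvD : ∀ u : A.domain, Binvh (u : H) ∈ A.domain)
    (C₀ : ℝ) (hC₀ : 0 < C₀)
    (hBhA : ∀ u : A.domain, ‖A ⟨Bh (u : H), hBhD u⟩‖ ≤ C₀ * (‖(u : H)‖ + ‖A u‖))
    (hBinvA : ∀ u : A.domain, ‖A ⟨Binvh (u : H), hBinvD u⟩‖ ≤ C₀ * (‖(u : H)‖ + ‖A u‖)) :
    ∀ (sol : DampedWaveSolution A B) (hs : HeatSolution A Binvh),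
      hs.v 0 = Bh (sol.u 0) + Binvh (sol.du 0) →
      Filter.Tendsto (fun t : ℝ => t * ‖sol.u t - Binvh (hs.v t)‖)
        Filter.atTop (nhds 0) := by
  intro sol hs h0
  letI : InnerProductSpace ℝ H := InnerProductSpace.complexToReal
  have hT := hA_sa.dense_domain
  have hadj : A.adjoint = A := LinearPMap.isSelfAdjoint_def.1 hA_sa
  have hsym : ∀ x y : A.domain, ⟪A x, (y : H)⟫ = ⟪(x : H), A y⟫ := by
    have h := LinearPMap.adjoint_isFormalAdjoint hT
    rw [hadj] at h
    exact h
  have hclos : ∀ y w : H, (∀ x : A.domain, ⟪w, (x : H)⟫ = ⟪y, A x⟫) →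
      ∃ hy : y ∈ A.domain, A ⟨y, hy⟩ = w := by
    intro y w h
    have hm := LinearPMap.mem_adjoint_domain_of_exists (T := A) y ⟨w, h⟩
    have he := LinearPMap.adjoint_apply_eq hT ⟨y, hm⟩ (x₀ := w) h
    rw [LinearPMap.ext_iff] at hadj
    obtain ⟨e1, e2⟩ := hadj
    refine ⟨e1 ▸ hm, ?_⟩
    rw [← he]
    exact (@e2 _ _ _).symm
  have hin : ∀ x y : H, inner ℝ x y = (⟪x, y⟫).re := fun _ _ => rfl
  have hB1 : ∀ x y : H, ⟪B x, y⟫ = ⟪x, B y⟫ :=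
    ContinuousLinearMap.isSelfAdjoint_iff_isSymmetric.1 hB_sa
  have hb2 : ∀ x, Bh (Bh x) = B x := fun x => by rw [← hBh_sq]; rfl
  have hb3 : ∀ x, Bh (Binvh x) = x := fun x => by
    have := congrArg (fun T : H →L[ℂ] H => T x) hBinv₂
    exact this
  refine DW.abstract_main (B.restrictScalars ℝ) (fun x y => ?_) c hc (fun x => ?_)
    (fun x a => ∃ hx : x ∈ A.domain, A ⟨x, hx⟩ = a) ?_ ?_ ?_ ?_ ?_ ?_
    sol.u sol.du sol.ddu sol.Au ?_ ?_ ?_ ?_ sol.cont_Au sol.cont_ddu ?_ ?_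
    (fun t => Binvh (hs.v t)) (fun t => Binvh (hs.dv t)) ?_ ?_ ?_ ?_ ?_
  · exact congrArg Complex.re (hB1 x y)
  · exact hB_pos x
  · rintro x _ y _ ⟨hx, rfl⟩ ⟨hy, rfl⟩
    exact congrArg Complex.re (hsym ⟨x, hx⟩ ⟨y, hy⟩)
  · rintro x _ ⟨hx, rfl⟩
    by_cases h : (⟨x, hx⟩ : A.domain) = 0
    · have : x = 0 := congrArg Subtype.val h
      rw [hin, h]
      subst this
      simp
    · exact (hA_pos _ h).le
  · rintro x _ y _ ⟨hx, rfl⟩ ⟨hy, rfl⟩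
    exact ⟨A.domain.sub_mem hx hy, A.map_sub ⟨x, hx⟩ ⟨y, hy⟩⟩
  · rintro r x _ ⟨hx, rfl⟩
    exact ⟨A.domain.smul_mem (r : ℂ) hx, A.map_smul (r : ℂ) ⟨x, hx⟩⟩
  · intro f a cf ca hfa t ht
    apply hclos
    intro x
    have h1 : ⟪(x : H), ∫ s in (0:ℝ)..t, a s⟫ = ∫ s in (0:ℝ)..t, ⟪(x : H), a s⟫ :=
      ((innerSL ℂ (x : H)).intervalIntegral_comp_comm (ca.intervalIntegrable 0 t)).symm
    have h2 : ⟪A x, ∫ s in (0:ℝ)..t, f s⟫ = ∫ s in (0:ℝ)..t, ⟪A x, f s⟫ :=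
      ((innerSL ℂ (A x)).intervalIntegral_comp_comm (cf.intervalIntegrable 0 t)).symm
    have h3 : ∫ s in (0:ℝ)..t, ⟪(x : H), a s⟫ = ∫ s in (0:ℝ)..t, ⟪A x, f s⟫ := by
      apply intervalIntegral.integral_congr
      intro s hs
      rw [Set.uIcc_of_le ht] at hs
      obtain ⟨hx, e⟩ := hfa s hs.1
      have := hsym x ⟨f s, hx⟩
      rw [e] at this
      exact this.symm
    rw [← inner_conj_symm, h1, h3, ← h2, inner_conj_symm]
  · intro w ε hε
    have hd : (LinearMap.range A.toFun).topologicalClosure = ⊤ := by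
      rw [Submodule.topologicalClosure_eq_top_iff, Submodule.eq_bot_iff]
      intro y hy
      rw [Submodule.mem_orthogonal'] at hy
      obtain ⟨hy1, hy2⟩ := hclos y 0 (fun x => by
        rw [inner_zero_left]
        exact (hy _ ⟨x, rfl⟩).symm)
      by_contra hne
      have := hA_pos ⟨y, hy1⟩ (fun h => hne (congrArg Subtype.val h))
      rw [hy2] at this
      simp at this
    have hw : w ∈ closure ((LinearMap.range A.toFun : Submodule ℂ H) : Set H) := by
      rw [← Submodule.topologicalClosure_coe, hd]
      trivial
    obtain ⟨_, ⟨x, rfl⟩, hx⟩ := Metric.mem_closure_iff.1 hw ε hε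
    refine ⟨x, A x, ⟨x.2, rfl⟩, ?_⟩
    rw [← dist_eq_norm]
    exact hx
  · intro t ht
    exact (sol.hdu t ht.le).hasDerivAt (Ici_mem_nhds ht)
  · intro t ht
    exact (sol.hddu t ht.le).hasDerivAt (Ici_mem_nhds ht)
  · exact fun t ht => (sol.hdu t ht).continuousWithinAt
  · exact fun t ht => (sol.hddu t ht).continuousWithinAt
  · exact fun t ht => ⟨sol.mem t ht, sol.hAu t ht⟩
  · exact fun t ht => sol.eqn t ht
  · intro t ht
    have h := (hs.hdv t ht.le).hasDerivAt (Ici_mem_nhds ht)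
    exact ((Binvh.restrictScalars ℝ).hasFDerivAt.comp_hasDerivAt t h)
  · intro t ht
    exact Binvh.continuous.continuousAt.comp_continuousWithinAt (hs.hdv t ht).continuousWithinAt
  · exact Binvh.continuous.comp_continuousOn hs.cont_dv
  · intro t ht
    refine ⟨hs.mem t ht, ?_⟩
    have h := congrArg Bh (hs.eqn t ht)
    rw [map_add, hb3, map_zero] at h
    change _ = -B (Binvh (hs.dv t))
    rw [← hb2, hb3]
    exact eq_neg_of_add_eq_zero_right h
  · change B (Binvh (hs.v 0)) = B (sol.u 0) + sol.du 0
    rw [← hb2, hb3, h0, map_add, hb2, hb3]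
end
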